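/- arXiv:1504.03308 — 2 statements merged into one kernel-verified Lean document; each statement's English description precedes it below -/
import Mathlib

section
/- Existence and uniqueness of the rough integral of a controlled one-form along a controlled path (Euclidean version): In the setting of the almost-additivity theorem — X a weak-geometric p-rough path with control ω on [0,T]; (ψ, U) a local gauge on ℝ^d with open domain D; W₀ open convex with W₀ × W₀ ⊆ D; (y, y†) an ℝ^d-valued rough path controlled by X with y([0,T]) ⊆ W₀; V a Banach space; (α, α†) a V-valued U-controlled one-form along y; S^𝒢_m(v,w) := ((D₂U)(m,m)⟨v⟩)(w) − (D₂²ψ)(m,m)(v,w); and z̃_{s,t} := α_s(ψ(y_s,y_t) + S^𝒢_{y_s}[(y_s† ⊗ y_s†)𝕏_{s,t}]) + α_s†((I_W ⊗ y_s†)𝕏_{s,t}) — there exists a unique V-valued rough path (z, z†) controlled by X on [0,T] such that z_0 = 0, z_s† = α_s ∘ y_s† for all s, and for some C < ∞, |z_t − z_s − z̃_{s,t}| ≤ C ω(s,t)^{3/p} for all 0 ≤ s ≤ t ≤ T. -/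
noncomputable section

open scoped BigOperators

/-- `ℝ^n` with the Euclidean norm. -/
abbrev Euc (n : ℕ) : Type := EuclideanSpace ℝ (Fin n)

/-- The `i`-th standard basis vector of `ℝ^n`. -/
def eb {n : ℕ} (i : Fin n) : Euc n := EuclideanSpace.single i 1

/-- Tensor product of two Euclidean vectors, realized in `ℝ^{n×m}` with the Euclidean norm. -/
def tensorE {n m : ℕ} (v : Euc n) (w : Euc m) : EuclideanSpace ℝ (Fin n × Fin m) :=
  (EuclideanSpace.equiv (Fin n × Fin m) ℝ).symm fun p => v p.1 * w p.2

/-- Application of the (unique) linear extension of a bilinear map `B` to a tensor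
`X ∈ ℝ^n ⊗ ℝ^m ≅ ℝ^{n × m}`. -/
def tapply {n m : ℕ} {V : Type*} [NormedAddCommGroup V] [NormedSpace ℝ V]
    (B : Euc n → Euc m → V) (X : EuclideanSpace ℝ (Fin n × Fin m)) : V :=
  ∑ q : Fin n × Fin m, X q • B (eb q.1) (eb q.2)
/-- `ω` is a control on the simplex `{(s,t) : 0 ≤ s ≤ t ≤ T}`. -/
structure IsControl (T : ℝ) (ω : ℝ → ℝ → ℝ) : Prop where
  cont : ContinuousOn (fun q : ℝ × ℝ => ω q.1 q.2)
    {q : ℝ × ℝ | 0 ≤ q.1 ∧ q.1 ≤ q.2 ∧ q.2 ≤ T}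
  nonneg : ∀ ⦃s t : ℝ⦄, 0 ≤ s → s ≤ t → t ≤ T → 0 ≤ ω s t
  zero : ∀ ⦃s : ℝ⦄, 0 ≤ s → s ≤ T → ω s s = 0
  superadditive : ∀ ⦃s t u : ℝ⦄, 0 ≤ s → s ≤ t → t ≤ u → u ≤ T → ω s t + ω t u ≤ ω s u
/-- `(x, XX)` is a `p`-rough path with control `ω` on `[0,T]`. -/
structure IsRoughPath (T p : ℝ) {k : ℕ} (ω : ℝ → ℝ → ℝ)
    (x : ℝ → Euc k) (XX : ℝ → ℝ → EuclideanSpace ℝ (Fin k × Fin k)) : Prop where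
  cont_x : ContinuousOn x (Set.Icc 0 T)
  cont_XX : ContinuousOn (fun q : ℝ × ℝ => XX q.1 q.2)
    {q : ℝ × ℝ | 0 ≤ q.1 ∧ q.1 ≤ q.2 ∧ q.2 ≤ T}
  chen : ∀ ⦃s t u : ℝ⦄, 0 ≤ s → s ≤ t → t ≤ u → u ≤ T →
    XX s u = XX s t + XX t u + tensorE (x t - x s) (x u - x t)
  bound_x : ∀ ⦃s t : ℝ⦄, 0 ≤ s → s ≤ t → t ≤ T → ‖x t - x s‖ ≤ ω s t ^ (1 / p)
  bound_XX : ∀ ⦃s t : ℝ⦄, 0 ≤ s → s ≤ t → t ≤ T → ‖XX s t‖ ≤ ω s t ^ (2 / p)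
/-- The rough path `(x, XX)` is weak-geometric: the symmetric part of `XX s t` is
`(1/2) x_{s,t} ⊗ x_{s,t}`. -/
def IsWeakGeometric (T : ℝ) {k : ℕ} (x : ℝ → Euc k)
    (XX : ℝ → ℝ → EuclideanSpace ℝ (Fin k × Fin k)) : Prop :=
  ∀ ⦃s t : ℝ⦄, 0 ≤ s → s ≤ t → t ≤ T → ∀ i j : Fin k,
    XX s t (i, j) + XX s t (j, i) = (x t - x s) i * (x t - x s) j
/-- `(y, y')` is a `V`-valued rough path controlled by `X = (x, ·)` (with control `ω`)
on the interval `[a, b]`. -/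
def IsCRP (p : ℝ) {k : ℕ} (ω : ℝ → ℝ → ℝ) (x : ℝ → Euc k)
    {V : Type*} [NormedAddCommGroup V] [NormedSpace ℝ V]
    (a b : ℝ) (y : ℝ → V) (y' : ℝ → Euc k →L[ℝ] V) : Prop :=
  ContinuousOn y (Set.Icc a b) ∧ ContinuousOn y' (Set.Icc a b) ∧
    ∃ C : ℝ, ∀ ⦃s t : ℝ⦄, a ≤ s → s ≤ t → t ≤ b →
      ‖y t - y s - y' s (x t - x s)‖ ≤ C * ω s t ^ (2 / p) ∧
      ‖y' t - y' s‖ ≤ C * ω s t ^ (1 / p)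
/-- `(ψ, U)` is a local gauge on `ℝ^d` with open domain `D`. -/
structure IsLocalGauge {d : ℕ} (D : Set (Euc d × Euc d))
    (ψ : Euc d × Euc d → Euc d) (U : Euc d × Euc d → Euc d →L[ℝ] Euc d) : Prop where
  open_dom : IsOpen D
  smooth_psi : ContDiffOn ℝ (⊤ : ℕ∞) ψ D
  smooth_U : ContDiffOn ℝ (⊤ : ℕ∞) U D
  diag_psi : ∀ x : Euc d, (x, x) ∈ D → ψ (x, x) = 0
  diag_dpsi : ∀ x : Euc d, (x, x) ∈ D →
    fderiv ℝ (fun w => ψ (x, w)) x = ContinuousLinearMap.id ℝ (Euc d)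
  diag_U : ∀ x : Euc d, (x, x) ∈ D → U (x, x) = ContinuousLinearMap.id ℝ (Euc d)

/-- `(α, α')` is a `V`-valued `U`-controlled (rough) one-form along `y` on `[0,T]`:
`α'_s ∈ L(W ⊗ ℝ^d, V)` is recorded in curried form, and the second estimate is recorded
slotwise in the `W`-variable (equivalently, in operator norm). -/
def IsControlledOneForm (T p : ℝ) {k d : ℕ} (ω : ℝ → ℝ → ℝ) (x : ℝ → Euc k)
    (U : Euc d × Euc d → Euc d →L[ℝ] Euc d) (y : ℝ → Euc d)
    {V : Type*} [NormedAddCommGroup V] [NormedSpace ℝ V]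
    (α : ℝ → Euc d →L[ℝ] V) (α' : ℝ → Euc k →L[ℝ] Euc d →L[ℝ] V) : Prop :=
  ContinuousOn α (Set.Icc 0 T) ∧ ContinuousOn α' (Set.Icc 0 T) ∧
    ∃ C : ℝ, ∀ ⦃s t : ℝ⦄, 0 ≤ s → s ≤ t → t ≤ T →
      ‖(α t).comp (U (y t, y s)) - α s - α' s (x t - x s)‖ ≤ C * ω s t ^ (2 / p) ∧
      ∀ w : Euc k,
        ‖(α' t w).comp (U (y t, y s)) - α' s w‖ ≤ C * ‖w‖ * ω s t ^ (1 / p)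

/-- The compatibility bilinear form `S^𝒢_m(v, w) = (D₂U)(m,m)⟨v⟩⟨w⟩ − (D₂²ψ)(m,m)(v, w)`
of a gauge `𝒢 = (ψ, U)` on `ℝ^d`. -/
def Sgauge {d : ℕ} (ψ : Euc d × Euc d → Euc d)
    (U : Euc d × Euc d → Euc d →L[ℝ] Euc d) (m v w : Euc d) : Euc d :=
  fderiv ℝ (fun z => U (m, z)) m v w
    - fderiv ℝ (fun z => fderiv ℝ (fun z' => ψ (m, z')) z) m v w

/-- The local gauge-integrand
`z̃_{s,t} = α_s (ψ(y_s,y_t) + S^𝒢_{y_s}[(y'_s ⊗ y'_s) 𝕏_{s,t}]) + α'_s ((I ⊗ y'_s) 𝕏_{s,t})`. -/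
def gaugeIntegrand {k d : ℕ} (ψ : Euc d × Euc d → Euc d)
    (U : Euc d × Euc d → Euc d →L[ℝ] Euc d)
    (XX : ℝ → ℝ → EuclideanSpace ℝ (Fin k × Fin k))
    (y : ℝ → Euc d) (y' : ℝ → Euc k →L[ℝ] Euc d)
    {V : Type*} [NormedAddCommGroup V] [NormedSpace ℝ V]
    (α : ℝ → Euc d →L[ℝ] V) (α' : ℝ → Euc k →L[ℝ] Euc d →L[ℝ] V)
    (s t : ℝ) : V :=
  α s (ψ (y s, y t) +
      tapply (fun v w => Sgauge ψ U (y s) (y' s v) (y' s w)) (XX s t)) +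
    tapply (fun w v => α' s w (y' s v)) (XX s t)

section sewingsec
open Finset

lemma IsControl.mono {T : ℝ} {ω : ℝ → ℝ → ℝ} (h : IsControl T ω) {s s' t' t : ℝ}
    (h0 : 0 ≤ s) (h1 : s ≤ s') (h2 : s' ≤ t') (h3 : t' ≤ t) (h4 : t ≤ T) :
    ω s' t' ≤ ω s t := by
  have a := h.superadditive h0 h1 (h2.trans h3) h4
  have b := h.superadditive (h0.trans h1) h2 h3 h4
  have c := h.nonneg h0 h1 (by linarith)
  have d := h.nonneg (by linarith : 0 ≤ t') h3 h4
  linarith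

lemma IsControl.sum_le {T : ℝ} {ω : ℝ → ℝ → ℝ} (h : IsControl T ω) {τ : ℕ → ℝ}
    (hτ : Monotone τ) (h0 : ∀ i, 0 ≤ τ i) (hT : ∀ i, τ i ≤ T) (n : ℕ) :
    ∑ i ∈ range n, ω (τ i) (τ (i+1)) ≤ ω (τ 0) (τ n) := by
  induction n with
  | zero => simp [h.zero (h0 0) (hT 0)]
  | succ n ih =>
    rw [sum_range_succ]
    have := h.superadditive (h0 0) (hτ (Nat.zero_le n)) (hτ (Nat.le_succ n)) (hT (n+1))
    simp only [Nat.succ_eq_add_one] at this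
    linarith

lemma IsControl.small {T : ℝ} {ω : ℝ → ℝ → ℝ} (h : IsControl T ω) {ε : ℝ} (hε : 0 < ε) :
    ∃ δ > 0, ∀ s t, 0 ≤ s → s ≤ t → t ≤ T → t - s < δ → ω s t < ε := by
  have hc : IsCompact {q : ℝ × ℝ | 0 ≤ q.1 ∧ q.1 ≤ q.2 ∧ q.2 ≤ T} := by
    refine (isCompact_Icc (a := ((0:ℝ),(0:ℝ))) (b := (T,T))).of_isClosed_subset ?_ ?_
    · exact (isClosed_le continuous_const continuous_fst).inter
        ((isClosed_le continuous_fst continuous_snd).inter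
          (isClosed_le continuous_snd continuous_const))
    · rintro ⟨a, b⟩ ⟨h1, h2, h3⟩
      simp only at h1 h2 h3
      exact ⟨⟨h1, h1.trans h2⟩, ⟨h2.trans h3, h3⟩⟩
  have hu := hc.uniformContinuousOn_of_continuous h.cont
  rw [Metric.uniformContinuousOn_iff] at hu
  obtain ⟨δ, hδ, H⟩ := hu ε hε
  refine ⟨δ, hδ, fun s t h0 h1 h2 h3 => ?_⟩
  have := H (s,t) ⟨h0, h1, h2⟩ (s,s) ⟨h0, le_refl s, h1.trans h2⟩ (by
    rw [Prod.dist_eq]; simp only [dist_self]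
    rw [Real.dist_eq, abs_of_nonneg (by linarith)]; simpa [hδ] using h3)
  simp only [h.zero h0 (h1.trans h2), Real.dist_eq, sub_zero] at this
  exact (le_abs_self _).trans_lt this

/-- sums of `ω ^ θ` over fine partitions are small -/
lemma IsControl.sum_pow_small {T : ℝ} {ω : ℝ → ℝ → ℝ} (h : IsControl T ω) {θ : ℝ}
    (hθ : 1 < θ) {ε : ℝ} (hε : 0 < ε) :
    ∃ δ > 0, ∀ (τ : ℕ → ℝ) (n : ℕ), Monotone τ → (∀ i, 0 ≤ τ i) → (∀ i, τ i ≤ T) →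
      (∀ i, τ (i+1) - τ i < δ) → ∑ i ∈ range n, ω (τ i) (τ (i+1)) ^ θ ≤ ε := by
  by_cases hT : 0 ≤ T
  swap
  · exact ⟨1, one_pos, fun τ n _ h0 h1 _ => absurd ((h0 0).trans (h1 0)) hT⟩
  have hΩ := h.nonneg le_rfl hT le_rfl
  set Ω := ω 0 T
  have hη : 0 < (ε / (Ω + 1)) ^ (1 / (θ - 1)) := by positivity
  obtain ⟨δ, hδ, H⟩ := h.small hη
  refine ⟨δ, hδ, fun τ n hm h0 h1 hd => ?_⟩
  have key : ∀ i, ω (τ i) (τ (i+1)) ^ θ ≤ (ε / (Ω + 1)) * ω (τ i) (τ (i+1)) := by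
    intro i
    have hn := h.nonneg (h0 i) (hm (Nat.le_succ i)) (h1 (i+1))
    have hl := H _ _ (h0 i) (hm (Nat.le_succ i)) (h1 (i+1)) (hd i)
    simp only [Nat.succ_eq_add_one] at hn hl
    generalize ω (τ i) (τ (i+1)) = r at *
    have : r ^ θ = r ^ (θ - 1) * r := by
      rcases hn.eq_or_lt with h | h
      · rw [← h]; simp [Real.zero_rpow (by linarith : θ ≠ 0)]
      · rw [← Real.rpow_add_one h.ne']; simp
    rw [this]
    gcongr
    calc r ^ (θ - 1) ≤ ((ε / (Ω + 1)) ^ (1 / (θ - 1))) ^ (θ - 1) :=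
          Real.rpow_le_rpow hn hl.le (by linarith)
      _ = ε / (Ω + 1) := by
          rw [← Real.rpow_mul (by positivity), one_div, inv_mul_cancel₀ (by linarith),
            Real.rpow_one]
  calc ∑ i ∈ range n, ω (τ i) (τ (i+1)) ^ θ
      ≤ ∑ i ∈ range n, (ε / (Ω + 1)) * ω (τ i) (τ (i+1)) := sum_le_sum fun i _ => key i
    _ = (ε / (Ω + 1)) * ∑ i ∈ range n, ω (τ i) (τ (i+1)) := by rw [mul_sum]
    _ ≤ (ε / (Ω + 1)) * Ω := by
        gcongr
        exact (h.sum_le hm h0 h1 n).trans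
          (h.mono le_rfl (h0 0) (hm (Nat.zero_le n)) (h1 n) le_rfl)
    _ ≤ ε := by
        rw [div_mul_eq_mul_div, div_le_iff₀ (by linarith)]; nlinarith

variable {V : Type*} [NormedAddCommGroup V]

def AlmostAdd (T θ C : ℝ) (ω : ℝ → ℝ → ℝ) (Ξ : ℝ → ℝ → V) : Prop :=
  ∀ s t u, 0 ≤ s → s ≤ t → t ≤ u → u ≤ T →
    ‖Ξ s u - Ξ s t - Ξ t u‖ ≤ C * ω s u ^ θ

lemma AlmostAdd.diag {T θ C : ℝ} {ω : ℝ → ℝ → ℝ} {Ξ : ℝ → ℝ → V} (h : IsControl T ω)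
    (hθ : 1 < θ) (hA : AlmostAdd T θ C ω Ξ) {s : ℝ} (h0 : 0 ≤ s) (h1 : s ≤ T) : Ξ s s = 0 := by
  have := hA s s s h0 le_rfl le_rfl h1
  rw [h.zero h0 h1, Real.zero_rpow (by linarith)] at this
  simpa using this

lemma AlmostAdd.max_ineq {T θ C : ℝ} {ω : ℝ → ℝ → ℝ} {Ξ : ℝ → ℝ → V} (h : IsControl T ω)
    (hθ : 1 < θ) (hC : 0 ≤ C) (hA : AlmostAdd T θ C ω Ξ) :
    ∃ K, 0 ≤ K ∧ ∀ τ : ℕ → ℝ, Monotone τ → (∀ i, 0 ≤ τ i) → (∀ i, τ i ≤ T) → ∀ n i,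
      ‖∑ l ∈ Ico i (i+n), Ξ (τ l) (τ (l+1)) - Ξ (τ i) (τ (i+n))‖ ≤ K * ω (τ i) (τ (i+n)) ^ θ := by
  have h2 : (2:ℝ) * (1/2)^θ < 1 := by
    have : (1/2:ℝ)^θ < (1/2:ℝ)^(1:ℝ) :=
      Real.rpow_lt_rpow_of_exponent_gt (by norm_num) (by norm_num) hθ
    rw [Real.rpow_one] at this; linarith
  set c : ℝ := (1/2)^θ with hc
  have hcpos : 0 ≤ c := by positivity
  refine ⟨2 * C / (1 - 2 * c), div_nonneg (by linarith) (by linarith), ?_⟩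
  set K := 2 * C / (1 - 2 * c)
  have hK : 0 ≤ K := div_nonneg (by linarith) (by linarith)
  have hKeq : 2 * c * K + 2 * C = K := by
    have : K * (1 - 2 * c) = 2 * C := div_mul_cancel₀ _ (by linarith)
    linarith
  intro τ hm h0 h1 n
  induction n using Nat.strong_induction_on with
  | _ n ih =>
  intro i
  rcases Nat.eq_zero_or_pos n with rfl | hn
  · simp only [add_zero, Ico_self, sum_empty, zero_sub, norm_neg]
    rw [hA.diag h hθ (h0 i) (h1 i), h.zero (h0 i) (h1 i), Real.zero_rpow (by linarith)]; simp
  set Ω := ω (τ i) (τ (i+n)) with hΩ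
  have hΩ0 : 0 ≤ Ω := h.nonneg (h0 i) (hm (by omega)) (h1 _)
  obtain ⟨j, hjn, hj1, hj2⟩ : ∃ j, j + 1 ≤ n ∧ ω (τ i) (τ (i+j)) ≤ Ω / 2 ∧
      ω (τ (i+j+1)) (τ (i+n)) ≤ Ω / 2 := by
    classical
    have hex : ∃ m, n ≤ m + 1 ∨ Ω/2 < ω (τ i) (τ (i+m+1)) := ⟨n, Or.inl (by omega)⟩
    refine ⟨Nat.find hex, ?_, ?_, ?_⟩
    · have : Nat.find hex ≤ n - 1 := Nat.find_min' hex (Or.inl (by omega))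
      omega
    · rcases Nat.eq_zero_or_pos (Nat.find hex) with h' | h'
      · rw [h']; simp [h.zero (h0 i) (h1 i)]; linarith
      · have := Nat.find_min hex (m := Nat.find hex - 1) (by omega)
        push Not at this
        have e : i + (Nat.find hex - 1) + 1 = i + Nat.find hex := by omega
        rw [e] at this
        exact this.2
    · have hle : Nat.find hex ≤ n - 1 := Nat.find_min' hex (Or.inl (by omega))
      rcases Nat.find_spec hex with h' | h'
      · have : i + Nat.find hex + 1 = i + n := by omega
        rw [this, h.zero (h0 _) (h1 _)]; linarith
      · have := h.superadditive (h0 i) (hm (by omega : i ≤ i + Nat.find hex + 1))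
          (hm (by omega : i + Nat.find hex + 1 ≤ i + n)) (h1 _)
        linarith
  have I1 := ih j (by omega) i
  have I2 := ih (n - (j+1)) (by omega) (i+j+1)
  have e : i + j + 1 + (n - (j+1)) = i + n := by omega
  rw [e] at I2
  have D1 := hA (τ i) (τ (i+j)) (τ (i+n)) (h0 _) (hm (by omega)) (hm (by omega)) (h1 _)
  have D2 := hA (τ (i+j)) (τ (i+j+1)) (τ (i+n)) (h0 _) (hm (by omega)) (hm (by omega)) (h1 _)
  have hp : ∀ r, 0 ≤ r → r ≤ Ω / 2 → r ^ θ ≤ c * Ω ^ θ := by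
    intro r hr0 hr
    rw [hc, ← Real.mul_rpow (by norm_num) hΩ0]
    exact Real.rpow_le_rpow hr0 (by linarith) (by linarith)
  have P1 := hp _ (h.nonneg (h0 _) (hm (by omega)) (h1 _)) hj1
  have P2 := hp _ (h.nonneg (h0 _) (hm (by omega)) (h1 _)) hj2
  have P3 : ω (τ (i+j)) (τ (i+n)) ^ θ ≤ Ω ^ θ :=
    Real.rpow_le_rpow (h.nonneg (h0 _) (hm (by omega)) (h1 _))
      (h.mono (h0 i) (hm (by omega)) (hm (by omega)) le_rfl (h1 _)) (by linarith)
  have hsum : ∑ l ∈ Ico i (i+n), Ξ (τ l) (τ (l+1)) =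
      ∑ l ∈ Ico i (i+j), Ξ (τ l) (τ (l+1)) + Ξ (τ (i+j)) (τ (i+j+1)) +
      ∑ l ∈ Ico (i+j+1) (i+n), Ξ (τ l) (τ (l+1)) := by
    rw [← sum_Ico_consecutive _ (by omega : i ≤ i+j+1) (by omega : i+j+1 ≤ i+n),
      sum_Ico_succ_top (by omega)]
  rw [hsum]
  set A := ∑ l ∈ Ico i (i+j), Ξ (τ l) (τ (l+1))
  set B := ∑ l ∈ Ico (i+j+1) (i+n), Ξ (τ l) (τ (l+1))
  calc ‖A + Ξ (τ (i+j)) (τ (i+j+1)) + B - Ξ (τ i) (τ (i+n))‖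
      = ‖(A - Ξ (τ i) (τ (i+j))) + (B - Ξ (τ (i+j+1)) (τ (i+n)))
        - (Ξ (τ i) (τ (i+n)) - Ξ (τ i) (τ (i+j)) - Ξ (τ (i+j)) (τ (i+n)))
        - (Ξ (τ (i+j)) (τ (i+n)) - Ξ (τ (i+j)) (τ (i+j+1)) - Ξ (τ (i+j+1)) (τ (i+n)))‖ := by
          congr 1; abel
    _ ≤ K * (c * Ω^θ) + K * (c * Ω^θ) + C * Ω^θ + C * Ω^θ := by
        refine (norm_sub_le _ _).trans (add_le_add ((norm_sub_le _ _).trans (add_le_add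
          ((norm_add_le _ _).trans (add_le_add (I1.trans ?_) (I2.trans ?_))) D1)) (D2.trans ?_))
        · gcongr
        · gcongr
        · gcongr
    _ = (2 * c * K + 2 * C) * Ω^θ := by ring
    _ = K * Ω^θ := by rw [hKeq]

def gpt (T : ℝ) (n i : ℕ) : ℝ := T * i / 2 ^ n

def clampP (s t x : ℝ) : ℝ := max s (min x t)

lemma clampP_mono (s t : ℝ) : Monotone (clampP s t) := fun _ _ h =>
  max_le_max le_rfl (min_le_min h le_rfl)

lemma gpt_mono {T : ℝ} (hT : 0 < T) (n : ℕ) : Monotone (gpt T n) := by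
  intro i j h
  unfold gpt
  gcongr

lemma clampP_lip (s t : ℝ) {x y : ℝ} (h : x ≤ y) : clampP s t y - clampP s t x ≤ y - x := by
  unfold clampP
  rcases le_total y t with h1 | h1 <;> rcases le_total x t with h2 | h2 <;>
  simp only [h1, h2, min_eq_left, min_eq_right] <;>
  rcases le_total s x with h3 | h3 <;> rcases le_total s y with h4 | h4 <;>
  rcases le_total s t with h5 | h5 <;>
  simp only [h3, h4, h5, max_eq_left, max_eq_right] <;> linarith

lemma gpt_step (T : ℝ) (n i : ℕ) : gpt T n (i+1) - gpt T n i = T / 2 ^ n := by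
  unfold gpt; push_cast; ring

lemma gpt_refine (T : ℝ) (n k i : ℕ) : gpt T (n+k) (i * 2 ^ k) = gpt T n i := by
  unfold gpt; push_cast; rw [pow_add]; field_simp

lemma fine_grid {T : ℝ} {δ : ℝ} (hδ : 0 < δ) : ∃ N : ℕ, ∀ n ≥ N, T / 2 ^ n < δ := by
  have : Filter.Tendsto (fun n : ℕ => T * (1/2:ℝ) ^ n) Filter.atTop (nhds (T * 0)) :=
    (tendsto_pow_atTop_nhds_zero_of_lt_one (by norm_num) (by norm_num)).const_mul T
  rw [mul_zero] at this
  have := this.eventually (gt_mem_nhds hδ)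
  obtain ⟨N, hN⟩ := Filter.eventually_atTop.1 this
  exact ⟨N, fun n hn => by simpa [div_eq_mul_inv] using hN n hn⟩

def cseq (T s t : ℝ) (n i : ℕ) : ℝ := clampP s t (gpt T n i)

lemma cseq_mono {T : ℝ} (hT : 0 < T) (s t : ℝ) (n : ℕ) : Monotone (cseq T s t n) :=
  (clampP_mono s t).comp (gpt_mono hT n)

lemma cseq_ge {T s t : ℝ} (n i : ℕ) : s ≤ cseq T s t n i := le_max_left _ _

lemma cseq_le {T s t : ℝ} (h : s ≤ t) (n i : ℕ) : cseq T s t n i ≤ t :=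
  max_le h (min_le_right _ _)

lemma cseq_zero {T s t : ℝ} (h0 : 0 ≤ s) (h : s ≤ t) (n : ℕ) : cseq T s t n 0 = s := by
  simp [cseq, clampP, gpt, h0, h0.trans h]

lemma cseq_last {T s t : ℝ} (h : s ≤ t) (h1 : t ≤ T) (n : ℕ) : cseq T s t n (2^n) = t := by
  simp [cseq, clampP, gpt, h, h1]

lemma cseq_step {T : ℝ} (hT : 0 < T) (s t : ℝ) (n i : ℕ) :
    cseq T s t n (i+1) - cseq T s t n i ≤ T / 2 ^ n := by
  rw [← gpt_step T n i]
  exact clampP_lip s t (gpt_mono hT n (Nat.le_succ i))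

def csum (T : ℝ) (Ξ : ℝ → ℝ → V) (s t : ℝ) (n : ℕ) : V :=
  ∑ i ∈ range (2^n), Ξ (cseq T s t n i) (cseq T s t n (i+1))

lemma sum_blocks (f : ℕ → V) (r m : ℕ) :
    ∑ l ∈ range (m * r), f l = ∑ q ∈ range m, ∑ l ∈ Ico (q*r) (q*r+r), f l := by
  induction m with
  | zero => simp
  | succ m ih =>
    have := sum_Ico_consecutive f (Nat.zero_le (m*r)) (Nat.le_add_right (m*r) r)
    rw [sum_range_succ, ← ih, Nat.succ_mul, range_eq_Ico, range_eq_Ico, this]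

lemma small_additive {T θ C : ℝ} (hT : 0 < T) {ω : ℝ → ℝ → ℝ} (h : IsControl T ω)
    (hθ : 1 < θ) (f : ℝ → V) (hf : ∀ s t, 0 ≤ s → s ≤ t → t ≤ T → ‖f t - f s‖ ≤ C * ω s t ^ θ)
    {t : ℝ} (ht0 : 0 ≤ t) (htT : t ≤ T) : f t = f 0 := by
  have key : ∀ ε > 0, ‖f t - f 0‖ ≤ 0 + ε := by
    intro ε hε
    obtain ⟨δ, hδ, H⟩ := h.sum_pow_small hθ (ε := ε / (|C| + 1)) (by positivity)
    obtain ⟨N, hN⟩ := fine_grid (T := T) hδ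
    have H' := H (cseq T 0 t N) (2^N) (cseq_mono hT 0 t N) (fun i => cseq_ge N i)
      (fun i => (cseq_le ht0 N i).trans htT)
      (fun i => (cseq_step hT 0 t N i).trans_lt (hN N le_rfl))
    have e : f t - f 0 = ∑ i ∈ range (2^N), (f (cseq T 0 t N (i+1)) - f (cseq T 0 t N i)) := by
      rw [sum_range_sub (fun i => f (cseq T 0 t N i)), cseq_last ht0 htT, cseq_zero le_rfl ht0]
    rw [e]
    calc _ ≤ ∑ i ∈ range (2^N), C * ω (cseq T 0 t N i) (cseq T 0 t N (i+1)) ^ θ :=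
          norm_sum_le_of_le _ fun i _ => hf _ _ (cseq_ge N i) (cseq_mono hT 0 t N (Nat.le_succ i))
            ((cseq_le ht0 N _).trans htT)
      _ ≤ (|C| + 1) * ∑ i ∈ range (2^N), ω (cseq T 0 t N i) (cseq T 0 t N (i+1)) ^ θ := by
          rw [mul_sum]
          refine sum_le_sum fun i _ => ?_
          have : 0 ≤ ω (cseq T 0 t N i) (cseq T 0 t N (i+1)) :=
            h.nonneg (cseq_ge N i) (cseq_mono hT 0 t N (Nat.le_succ i))
            ((cseq_le ht0 N _).trans htT)
          gcongr
          linarith [le_abs_self C]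
      _ ≤ (|C| + 1) * (ε / (|C| + 1)) := by gcongr
      _ = 0 + ε := by rw [zero_add]; field_simp
  have := le_of_forall_pos_le_add key
  exact sub_eq_zero.1 (norm_le_zero_iff.1 this)

theorem sewing [CompleteSpace V] {T θ C : ℝ} (hT : 0 < T) {ω : ℝ → ℝ → ℝ} {Ξ : ℝ → ℝ → V}
    (h : IsControl T ω) (hθ : 1 < θ) (hC : 0 ≤ C) (hA : AlmostAdd T θ C ω Ξ) :
    ∃ z : ℝ → V, z 0 = 0 ∧ ∃ K, ∀ s t, 0 ≤ s → s ≤ t → t ≤ T →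
      ‖z t - z s - Ξ s t‖ ≤ K * ω s t ^ θ := by
  obtain ⟨K, hK, hmax⟩ := hA.max_ineq h hθ hC
  have conv : ∀ s t, 0 ≤ s → s ≤ t → t ≤ T →
      ∃ L, Filter.Tendsto (csum T Ξ s t) Filter.atTop (nhds L) := by
    intro s t h0 hst htT
    refine cauchySeq_tendsto_of_complete (Metric.cauchySeq_iff'.2 fun ε hε => ?_)
    obtain ⟨δ, hδ, H⟩ := h.sum_pow_small hθ (ε := ε / (K + 1)) (by positivity)
    obtain ⟨N, hN⟩ := fine_grid (T := T) hδ
    refine ⟨N, fun m hm => ?_⟩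
    obtain ⟨k, rfl⟩ := Nat.exists_eq_add_of_le hm
    have H' := H (cseq T s t N) (2^N) (cseq_mono hT s t N) (fun i => h0.trans (cseq_ge N i))
      (fun i => (cseq_le hst N i).trans htT)
      (fun i => (cseq_step hT s t N i).trans_lt (hN N le_rfl))
    rw [dist_eq_norm]
    unfold csum
    rw [pow_add, sum_blocks, ← sum_sub_distrib]
    have hr : ∀ q, cseq T s t (N+k) (q * 2^k) = cseq T s t N q := fun q => by
      unfold cseq; rw [gpt_refine]
    calc _ ≤ ∑ i ∈ range (2^N), K * ω (cseq T s t N i) (cseq T s t N (i+1)) ^ θ := by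
          refine norm_sum_le_of_le _ fun q _ => ?_
          have := hmax (cseq T s t (N+k)) (cseq_mono hT s t _) (fun i => h0.trans (cseq_ge _ i))
            (fun i => (cseq_le hst _ i).trans htT) (2^k) (q * 2^k)
          rw [← Nat.succ_mul, hr, hr] at this
          rw [← Nat.succ_mul]
          exact this
      _ = K * ∑ i ∈ range (2^N), ω (cseq T s t N i) (cseq T s t N (i+1)) ^ θ := by rw [mul_sum]
      _ ≤ K * (ε / (K + 1)) := by gcongr
      _ < ε := by
        rw [mul_div_assoc', div_lt_iff₀ (by linarith)]; nlinarith
  choose! I hI using conv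
  have add : ∀ s t u, 0 ≤ s → s ≤ t → t ≤ u → u ≤ T → I s u = I s t + I t u := by
    intro s t u h0 h1 h2 h3
    have L1 := hI s u h0 (h1.trans h2) h3
    have L2 := (hI s t h0 h1 (h2.trans h3)).add (hI t u (h0.trans h1) h2 h3)
    have L3 : Filter.Tendsto (fun n => csum T Ξ s u n - (csum T Ξ s t n + csum T Ξ t u n))
        Filter.atTop (nhds 0) := by
      rw [Metric.tendsto_atTop]
      intro ε hε
      obtain ⟨δ, hδ, H⟩ := h.sum_pow_small hθ (ε := ε / (C + 1)) (by positivity)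
      obtain ⟨N, hN⟩ := fine_grid (T := T) hδ
      refine ⟨N, fun n hn => ?_⟩
      have H' := H (cseq T s u n) (2^n) (cseq_mono hT s u n) (fun i => h0.trans (cseq_ge n i))
        (fun i => (cseq_le (h1.trans h2) n i).trans h3)
        (fun i => (cseq_step hT s u n i).trans_lt (hN n hn))
      rw [dist_eq_norm, sub_zero]
      unfold csum
      rw [← sum_add_distrib, ← sum_sub_distrib]
      have c1 : ∀ i, cseq T s t n i = min (cseq T s u n i) t := fun i => by
        unfold cseq clampP
        generalize gpt T n i = x
        rw [max_min_distrib_left, max_eq_right h1, max_min_distrib_left,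
          max_eq_right (h1.trans h2), min_assoc, min_eq_right h2]
      have c2 : ∀ i, cseq T t u n i = max (cseq T s u n i) t := fun i => by
        unfold cseq clampP
        generalize gpt T n i = x
        rw [max_comm s, max_assoc, max_eq_right h1, max_comm]
      calc _ ≤ ∑ i ∈ range (2^n), C * ω (cseq T s u n i) (cseq T s u n (i+1)) ^ θ := by
            refine norm_sum_le_of_le _ fun i _ => ?_
            rw [c1, c1, c2, c2]
            have m1 := cseq_mono hT s u n (Nat.le_succ i)
            have m2 := h0.trans (cseq_ge (T := T) (s := s) (t := u) n i)
            have m3 := (cseq_le (T := T) (h1.trans h2) n (i+1)).trans h3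
            simp only [Nat.succ_eq_add_one] at m1
            generalize cseq T s u n i = a at *
            generalize cseq T s u n (i+1) = b at *
            have hω : 0 ≤ ω a b ^ θ := Real.rpow_nonneg (h.nonneg m2 m1 m3) _
            have hd : Ξ t t = 0 := hA.diag h hθ (h0.trans h1) (h2.trans h3)
            rcases le_total b t with hb | hb
            · rw [min_eq_left hb, min_eq_left (m1.trans hb), max_eq_right hb,
                max_eq_right (m1.trans hb), hd]
              simp; positivity
            · rcases le_total a t with ha | ha
              · rw [min_eq_left ha, min_eq_right hb, max_eq_right ha, max_eq_left hb, ← sub_sub]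
                exact hA a t b m2 ha hb m3
              · rw [min_eq_right ha, min_eq_right hb, max_eq_left ha, max_eq_left hb, hd]
                simp; positivity
        _ = C * ∑ i ∈ range (2^n), ω (cseq T s u n i) (cseq T s u n (i+1)) ^ θ := by
            rw [mul_sum]
        _ ≤ C * (ε / (C + 1)) := by gcongr
        _ < ε := by
          rw [mul_div_assoc', div_lt_iff₀ (by linarith)]; nlinarith
    have := tendsto_nhds_unique L3 (L1.sub L2)
    exact (sub_eq_zero.1 this.symm)
  refine ⟨I 0, ?_, K, fun s t h0 h1 h2 => ?_⟩
  · have := add 0 0 0 le_rfl le_rfl le_rfl hT.le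
    simpa using this
  · rw [add 0 s t le_rfl h0 h1 h2, add_sub_cancel_left]
    refine le_of_tendsto ((hI s t h0 h1 h2).sub_const (Ξ s t)).norm (Filter.Eventually.of_forall ?_)
    intro n
    have := hmax (cseq T s t n) (cseq_mono hT s t _) (fun i => h0.trans (cseq_ge _ i))
            (fun i => (cseq_le h1 _ i).trans h2) (2^n) 0
    rw [zero_add, cseq_zero h0 h1, cseq_last h1 h2, ← Finset.range_eq_Ico] at this
    exact this

end sewingsec

section calculus
variable {E F : Type*} [NormedAddCommGroup E] [NormedSpace ℝ E]
  [NormedAddCommGroup F] [NormedSpace ℝ F]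

lemma exists_compact_convex [FiniteDimensional ℝ E] {W Q : Set E} (hW : IsOpen W)
    (hc : Convex ℝ W) (hQ : IsCompact Q) (hQW : Q ⊆ W) :
    ∃ K, IsCompact K ∧ Convex ℝ K ∧ Q ⊆ K ∧ K ⊆ W := by
  have : ∃ f : Set E, f.Finite ∧ f ⊆ W ∧ Q ⊆ convexHull ℝ f := by
    refine hQ.induction_on (p := fun Q => ∃ f : Set E, f.Finite ∧ f ⊆ W ∧ Q ⊆ convexHull ℝ f)
      ⟨∅, Set.finite_empty, Set.empty_subset _, Set.empty_subset _⟩ ?_ ?_ ?_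
    · rintro s t hst ⟨f, h1, h2, h3⟩
      exact ⟨f, h1, h2, hst.trans h3⟩
    · rintro s t ⟨f, h1, h2, h3⟩ ⟨g, h4, h5, h6⟩
      exact ⟨f ∪ g, h1.union h4, Set.union_subset h2 h5, Set.union_subset
        (h3.trans (convexHull_mono Set.subset_union_left))
        (h6.trans (convexHull_mono Set.subset_union_right))⟩
    · intro x hx
      obtain ⟨b, hb1, hb2⟩ := exists_mem_interior_convexHull_affineBasis (hW.mem_nhds (hQW hx))
      refine ⟨_, mem_nhdsWithin_of_mem_nhds (mem_interior_iff_mem_nhds.1 hb1), Set.range b,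
        Set.finite_range _, (subset_convexHull ℝ _).trans hb2, le_rfl⟩
  obtain ⟨f, h1, h2, h3⟩ := this
  exact ⟨convexHull ℝ f, h1.isCompact_convexHull ℝ, convex_convexHull ℝ f, h3,
    convexHull_min h2 hc⟩

def dtwo (H : E × E → F) (q : E × E) : E →L[ℝ] F := fderiv ℝ (fun z => H (q.1, z)) q.2

variable {D : Set (E × E)} {H : E × E → F} {K : Set E}

lemma dtwo_hasFDerivAt (hD : IsOpen D) (hH : ContDiffOn ℝ (⊤ : ℕ∞) H D) {q : E × E} (hq : q ∈ D) :
    HasFDerivAt (fun z => H (q.1, z))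
      ((fderiv ℝ H q).comp (ContinuousLinearMap.inr ℝ E E)) q.2 := by
  have h1 : HasFDerivAt H (fderiv ℝ H q) (q.1, q.2) :=
    ((hH.differentiableOn (by simp)).differentiableAt (hD.mem_nhds hq)).hasFDerivAt
  exact h1.comp q.2 (hasFDerivAt_prodMk_right q.1 q.2)

lemma dtwo_eq (hD : IsOpen D) (hH : ContDiffOn ℝ (⊤ : ℕ∞) H D) {q : E × E} (hq : q ∈ D) :
    dtwo H q = (fderiv ℝ H q).comp (ContinuousLinearMap.inr ℝ E E) :=
  (dtwo_hasFDerivAt hD hH hq).fderiv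

lemma dtwo_hasFDerivAt' (hD : IsOpen D) (hH : ContDiffOn ℝ (⊤ : ℕ∞) H D) {m w : E}
    (hq : (m, w) ∈ D) : HasFDerivAt (fun z => H (m, z)) (dtwo H (m, w)) w := by
  rw [dtwo_eq hD hH hq]
  exact dtwo_hasFDerivAt hD hH hq

lemma dtwo_smooth (hD : IsOpen D) (hH : ContDiffOn ℝ (⊤ : ℕ∞) H D) :
    ContDiffOn ℝ (⊤ : ℕ∞) (dtwo H) D := by
  have : ContDiffOn ℝ (⊤ : ℕ∞) (fun q => (fderiv ℝ H q).comp (ContinuousLinearMap.inr ℝ E E)) D :=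
    (hH.fderiv_of_isOpen hD (by simp)).clm_comp contDiffOn_const
  exact this.congr fun q hq => dtwo_eq hD hH hq

lemma smooth_bdd (hH : ContDiffOn ℝ (⊤ : ℕ∞) H D) (hK : IsCompact K)
    (hKD : K ×ˢ K ⊆ D) : ∃ C, 0 ≤ C ∧ ∀ m ∈ K, ∀ w ∈ K, ‖H (m, w)‖ ≤ C := by
  obtain ⟨C, hC⟩ := (hK.prod hK).exists_bound_of_continuousOn (hH.continuousOn.mono hKD)
  exact ⟨max C 0, le_max_right _ _, fun m hm w hw => (hC (m,w) ⟨hm, hw⟩).trans (le_max_left _ _)⟩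

lemma smooth_lip (hD : IsOpen D) (hH : ContDiffOn ℝ (⊤ : ℕ∞) H D) (hK : IsCompact K)
    (hKc : Convex ℝ K) (hKD : K ×ˢ K ⊆ D) :
    ∃ C, 0 ≤ C ∧ ∀ m ∈ K, ∀ w ∈ K, ∀ m' ∈ K, ∀ w' ∈ K,
      ‖H (m', w') - H (m, w)‖ ≤ C * (‖m' - m‖ + ‖w' - w‖) := by
  obtain ⟨C, hC0, hC⟩ := smooth_bdd (hH.fderiv_of_isOpen hD (m := (⊤ : ℕ∞)) (by simp)) hK hKD
  refine ⟨C, hC0, fun m hm w hw m' hm' w' hw' => ?_⟩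
  refine ((hKc.prod hKc).norm_image_sub_le_of_norm_fderiv_le (𝕜 := ℝ) (C := C)
    (fun q hq => (hH.differentiableOn (by simp)).differentiableAt (hD.mem_nhds (hKD hq)))
    (fun q hq => hC q.1 hq.1 q.2 hq.2) (x := (m, w)) (y := (m', w')) ⟨hm, hw⟩ ⟨hm', hw'⟩).trans ?_
  gcongr
  rw [Prod.norm_def]
  exact max_le_add_of_nonneg (norm_nonneg _) (norm_nonneg _)

lemma taylor_two (hD : IsOpen D) (hH : ContDiffOn ℝ (⊤ : ℕ∞) H D) (hK : IsCompact K)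
    (hKc : Convex ℝ K) (hKD : K ×ˢ K ⊆ D) :
    ∃ C, 0 ≤ C ∧ ∀ m ∈ K, ∀ w ∈ K, ∀ w' ∈ K,
      ‖H (m, w') - H (m, w) - dtwo H (m, w) (w' - w)‖ ≤ C * ‖w' - w‖ ^ 2 := by
  obtain ⟨C, hC0, hC⟩ := smooth_lip hD (dtwo_smooth hD hH) hK hKc hKD
  refine ⟨C, hC0, fun m hm w hw w' hw' => ?_⟩
  have hs : segment ℝ w w' ⊆ K := hKc.segment_subset hw hw'
  have := (convex_segment w w').norm_image_sub_le_of_norm_hasFDerivWithin_le' (𝕜 := ℝ)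
    (f := fun z => H (m, z)) (f' := fun z => dtwo H (m, z)) (φ := dtwo H (m, w))
    (C := C * ‖w' - w‖) (x := w) (y := w')
    (fun z hz => (dtwo_hasFDerivAt' hD hH (hKD ⟨hm, hs hz⟩)).hasFDerivWithinAt)
    (fun z hz => by
      refine (hC m hm w hw m hm z (hs hz)).trans ?_
      rw [sub_self, norm_zero, zero_add]
      gcongr
      exact norm_sub_le_of_mem_segment hz)
    (left_mem_segment ℝ w w') (right_mem_segment ℝ w w')
  refine this.trans (le_of_eq ?_)
  ring

lemma mixed_lip (hD : IsOpen D) (hH : ContDiffOn ℝ (⊤ : ℕ∞) H D) (hK : IsCompact K)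
    (hKc : Convex ℝ K) (hKD : K ×ˢ K ⊆ D) :
    ∃ C, 0 ≤ C ∧ ∀ m ∈ K, ∀ n ∈ K, ∀ w ∈ K, ∀ w' ∈ K,
      ‖(H (m, w') - H (n, w')) - (H (m, w) - H (n, w))‖ ≤ C * ‖m - n‖ * ‖w' - w‖ := by
  obtain ⟨C, hC0, hC⟩ := smooth_lip hD (dtwo_smooth hD hH) hK hKc hKD
  refine ⟨C, hC0, fun m hm n hn w hw w' hw' => ?_⟩
  exact hKc.norm_image_sub_le_of_norm_hasFDerivWithin_le (𝕜 := ℝ)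
    (f := fun z => H (m, z) - H (n, z)) (f' := fun z => dtwo H (m, z) - dtwo H (n, z))
    (C := C * ‖m - n‖) (x := w) (y := w')
    (fun z hz => ((dtwo_hasFDerivAt' hD hH (hKD ⟨hm, hz⟩)).sub
      (dtwo_hasFDerivAt' hD hH (hKD ⟨hn, hz⟩))).hasFDerivWithinAt)
    (fun z hz => by
      refine (hC n hn z hz m hm z hz).trans (le_of_eq ?_)
      simp) hw hw'

lemma mixed_taylor (hD : IsOpen D) (hH : ContDiffOn ℝ (⊤ : ℕ∞) H D) (hK : IsCompact K)
    (hKc : Convex ℝ K) (hKD : K ×ˢ K ⊆ D) :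
    ∃ C, 0 ≤ C ∧ ∀ m ∈ K, ∀ n ∈ K, ∀ w ∈ K, ∀ w' ∈ K,
      ‖(H (m, w') - H (n, w')) - (H (m, w) - H (n, w)) -
        (dtwo H (m, w) - dtwo H (n, w)) (w' - w)‖ ≤ C * ‖m - n‖ * ‖w' - w‖ ^ 2 := by
  obtain ⟨C, hC0, hC⟩ := mixed_lip hD (dtwo_smooth hD hH) hK hKc hKD
  refine ⟨C, hC0, fun m hm n hn w hw w' hw' => ?_⟩
  have hs : segment ℝ w w' ⊆ K := hKc.segment_subset hw hw'
  have := (convex_segment w w').norm_image_sub_le_of_norm_hasFDerivWithin_le' (𝕜 := ℝ)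
    (f := fun z => H (m, z) - H (n, z)) (f' := fun z => dtwo H (m, z) - dtwo H (n, z))
    (φ := dtwo H (m, w) - dtwo H (n, w))
    (C := C * ‖m - n‖ * ‖w' - w‖) (x := w) (y := w')
    (fun z hz => ((dtwo_hasFDerivAt' hD hH (hKD ⟨hm, hs hz⟩)).sub
      (dtwo_hasFDerivAt' hD hH (hKD ⟨hn, hs hz⟩))).hasFDerivWithinAt)
    (fun z hz => by
      refine (hC m hm n hn w hw z (hs hz)).trans ?_
      gcongr
      exact norm_sub_le_of_mem_segment hz)
    (left_mem_segment ℝ w w') (right_mem_segment ℝ w w')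
  refine this.trans (le_of_eq ?_)
  ring

end calculus

set_option linter.unusedSectionVars false

section algebra
open Asymptotics Filter
variable {ι : Type*} {F G : Type*} [NormedAddCommGroup F] [NormedSpace ℝ F]
  [NormedAddCommGroup G] [NormedSpace ℝ G]

def OO (l : Filter ι) (e : ι → ℝ) (n : ℕ) (f : ι → F) : Prop := f =O[l] fun i => e i ^ n

variable {l : Filter ι} {e : ι → ℝ}

lemma OO.add {n : ℕ} {f g : ι → F} (hf : OO l e n f) (hg : OO l e n g) :
    OO l e n (fun i => f i + g i) := IsBigO.add hf hg
lemma OO.sub {n : ℕ} {f g : ι → F} (hf : OO l e n f) (hg : OO l e n g) :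
    OO l e n (fun i => f i - g i) := IsBigO.sub hf hg
lemma OO.neg {n : ℕ} {f : ι → F} (hf : OO l e n f) :
    OO l e n (fun i => - f i) := IsBigO.neg_left hf
lemma OO.congr {n : ℕ} {f g : ι → F} (hf : OO l e n f) (h : ∀ i, f i = g i) :
    OO l e n g := IsBigO.congr_left hf h
lemma OO.lower {n : ℕ} {f : ι → F} (hf : OO l e (n+1) f) (he : OO l e 0 e) :
    OO l e n f := by
  refine IsBigO.trans hf ?_
  have := (isBigO_refl (fun i => e i ^ n) l).mul (show e =O[l] fun i => e i ^ 0 from he)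
  simpa [pow_succ] using this
lemma OO.app {n m : ℕ} {A : ι → F →L[ℝ] G} {v : ι → F} (hA : OO l e n A) (hv : OO l e m v) :
    OO l e (n+m) (fun i => A i (v i)) := by
  have h1 : (fun i => A i (v i)) =O[l] fun i => ‖A i‖ * ‖v i‖ :=
    IsBigO.of_bound 1 (Eventually.of_forall fun i => by
      simpa using (A i).le_opNorm (v i))
  have h2 := IsBigO.mul (IsBigO.norm_left hA) (IsBigO.norm_left hv)
  simp only [← pow_add] at h2
  exact h1.trans h2
lemma OO.comp {F' : Type*} [NormedAddCommGroup F'] [NormedSpace ℝ F'] {n m : ℕ}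
    {A : ι → F →L[ℝ] G} {v : ι → F' →L[ℝ] F} (hA : OO l e n A)
    (hv : OO l e m v) : OO l e (n+m) (fun i => (A i).comp (v i)) := by
  have h1 : (fun i => (A i).comp (v i)) =O[l] fun i => ‖A i‖ * ‖v i‖ :=
    IsBigO.of_bound 1 (Eventually.of_forall fun i => by
      simpa using (A i).opNorm_comp_le (v i))
  have h2 := IsBigO.mul (IsBigO.norm_left hA) (IsBigO.norm_left hv)
  simp only [← pow_add] at h2
  exact h1.trans h2
lemma OO.smul {n m : ℕ} {a : ι → ℝ} {v : ι → F} (ha : OO l e n a) (hv : OO l e m v) :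
    OO l e (n+m) (fun i => a i • v i) := by
  have h2 := IsBigO.smul ha hv
  simp only [← pow_add, smul_eq_mul] at h2
  exact h2
lemma OO.const (c : F) : OO l e 0 (fun _ => c) := by
  simpa [OO] using isBigO_const_const (l := l) c (one_ne_zero (α := ℝ))
lemma OO.sum {κ : Type*} {s : Finset κ} {n : ℕ} {f : κ → ι → F} (h : ∀ j ∈ s, OO l e n (f j)) :
    OO l e n (fun i => ∑ j ∈ s, f j i) := by
  have := IsBigO.sum h
  refine OO.congr this fun i => ?_
  simp

variable {E W V : Type*} [NormedAddCommGroup E] [NormedSpace ℝ E]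
  [NormedAddCommGroup W] [NormedSpace ℝ W] [NormedAddCommGroup V] [NormedSpace ℝ V]

lemma alpha_diff {αs αt : ι → E →L[ℝ] V}
    {Ust : ι → E →L[ℝ] E} (hαt : OO l e 0 αt)
    (hU : OO l e 1 (fun i => Ust i - ContinuousLinearMap.id ℝ E))
    (h1 : OO l e 1 (fun i => (αt i).comp (Ust i) - αs i)) :
    OO l e 1 (fun i => αt i - αs i) := by
  have := h1.sub (hαt.comp hU)
  refine OO.congr this fun i => ?_
  ext v; simp

lemma main_alg (he : OO l e 0 e) {αs αt : ι → E →L[ℝ] V} {a' : ι → W →L[ℝ] E →L[ℝ] V}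
    {ys yt : ι → W →L[ℝ] E} {a b ψtu P : ι → E} {ξ η : ι → W}
    {Us Ut Ps : ι → E →L[ℝ] E →L[ℝ] E} {Ust : ι → E →L[ℝ] E}
    (hαs : OO l e 0 αs) (hαt : OO l e 0 αt) (ha' : OO l e 0 a') (hys : OO l e 0 ys)
    (hUs : OO l e 0 Us) (hUt : OO l e 0 Ut) (hPs : OO l e 0 Ps)
    (hξ : OO l e 1 ξ) (hη : OO l e 1 η)
    (ha : OO l e 2 (fun i => a i - ys i (ξ i))) (hb : OO l e 2 (fun i => b i - yt i (η i)))
    (hy : OO l e 1 (fun i => yt i - ys i))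
    (hU : OO l e 2 (fun i => Ust i - ContinuousLinearMap.id ℝ E + Ut i (a i)))
    (hUU : OO l e 1 (fun i => Ut i - Us i))
    (hα : OO l e 2 (fun i => (αt i).comp (Ust i) - αs i - a' i (ξ i)))
    (hψ : OO l e 2 (fun i => ψtu i - b i))
    (hP : OO l e 3 (fun i => P i - Ps i (a i) (b i))) :
    OO l e 3 (fun i => αs i (P i) + (αs i - αt i) (ψtu i) +
      (αs i ((Us i - Ps i) (ys i (ξ i)) (ys i (η i))) + a' i (ξ i) (ys i (η i)))) := by
  have a1 : OO l e 1 a := ((ha.lower he).add (hys.app hξ)).congr fun i => by abel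
  have hb2 : OO l e 2 (fun i => b i - ys i (η i)) := (hb.add (hy.app hη)).congr fun i => by
    simp
  have b1 : OO l e 1 b := ((hb2.lower he).add (hys.app hη)).congr fun i => by abel
  have U1 : OO l e 1 (fun i => Ust i - ContinuousLinearMap.id ℝ E) :=
    ((hU.lower he).sub (hUt.app a1)).congr fun i => by abel
  have hd : OO l e 1 (fun i => αt i - αs i) := by
    refine alpha_diff hαt U1 ?_
    exact ((hα.lower he).add (ha'.app hξ)).congr fun i => by abel
  have R : OO l e 2 (fun i => αt i - αs i - a' i (ξ i) - (αs i).comp (Us i (a i))) := by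
    have := ((hα.sub (hαt.comp hU)).add (hd.comp (hUt.app a1))).add (hαs.comp (hUU.app a1))
    refine OO.congr this fun i => ?_
    ext v; simp; abel
  have S0 : OO l e 0 (fun i => Us i - Ps i) := hUs.sub hPs
  have r1 := hαs.app hP
  have r2 := hd.app hψ
  have r3 := R.app b1
  have r4 := (ha'.app hξ).app hb2
  have r5 := hαs.app ((S0.app ha).app b1)
  have r6 := hαs.app ((S0.app (hys.app hξ)).app hb2)
  refine OO.congr (((((r1.sub r2).sub r3).sub r4).sub r5).sub r6) fun i => ?_
  simp
  abel

end algebra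

section tens
variable {V : Type*} [NormedAddCommGroup V] [NormedSpace ℝ V] {n m : ℕ}

lemma euc_sum (v : Euc n) : v = ∑ i, v i • eb i := by
  ext j
  simp [eb, Pi.single_apply]

lemma tapply_add (B : Euc n → Euc m → V) (X Y : EuclideanSpace ℝ (Fin n × Fin m)) :
    tapply B (X + Y) = tapply B X + tapply B Y := by
  simp [tapply, add_smul, Finset.sum_add_distrib]

lemma tapply_tensor (B : Euc n → Euc m → V) (L : Euc n →ₗ[ℝ] Euc m →ₗ[ℝ] V)
    (hL : ∀ v w, B v w = L v w) (v : Euc n) (w : Euc m) : tapply B (tensorE v w) = B v w := by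
  have : L v w = L (∑ i, v i • eb i) (∑ i, w i • eb i) := by rw [← euc_sum, ← euc_sum]
  rw [hL, this]
  simp only [tapply, hL, tensorE, map_sum, map_smul, LinearMap.sum_apply, LinearMap.smul_apply,
    Fintype.sum_prod_type]
  simp only [Finset.smul_sum, smul_smul]
  rw [Finset.sum_comm]
  refine Finset.sum_congr rfl fun i _ => Finset.sum_congr rfl fun j _ => ?_
  rw [mul_comm (w i)]
  rfl

end tens


section concrete
open Asymptotics Filter

def S2 (T : ℝ) : Set (ℝ × ℝ) := {q | 0 ≤ q.1 ∧ q.1 ≤ q.2 ∧ q.2 ≤ T}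
def S3 (T : ℝ) : Set (ℝ × ℝ × ℝ) := {q | 0 ≤ q.1 ∧ q.1 ≤ q.2.1 ∧ q.2.1 ≤ q.2.2 ∧ q.2.2 ≤ T}
def e2 (p : ℝ) (ω : ℝ → ℝ → ℝ) (q : ℝ × ℝ) : ℝ := ω q.1 q.2 ^ (1 / p)
def e3 (p : ℝ) (ω : ℝ → ℝ → ℝ) (q : ℝ × ℝ × ℝ) : ℝ := ω q.1 q.2.2 ^ (1 / p)

lemma pw2 {w p : ℝ} (h : 0 ≤ w) : w ^ (2 / p) = (w ^ (1 / p)) ^ 2 := by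
  rw [← Real.rpow_natCast, ← Real.rpow_mul h]; congr 1; push_cast; ring
lemma pw3 {w p : ℝ} (h : 0 ≤ w) : w ^ (3 / p) = (w ^ (1 / p)) ^ 3 := by
  rw [← Real.rpow_natCast, ← Real.rpow_mul h]; congr 1; push_cast; ring

section gen
variable {ι F G : Type*} [NormedAddCommGroup F] [NormedAddCommGroup G] {S : Set ι} {e : ι → ℝ}

lemma OO.mk {n : ℕ} {f : ι → F} (C : ℝ) (h : ∀ i ∈ S, ‖f i‖ ≤ C * e i ^ n) :
    OO (𝓟 S) e n f := by
  refine isBigO_principal.2 ⟨|C|, fun i hi => (h i hi).trans ?_⟩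
  rw [Real.norm_eq_abs, ← abs_mul]
  exact le_abs_self _

lemma OO.elim {n : ℕ} {f : ι → F} (he : ∀ i ∈ S, 0 ≤ e i) (h : OO (𝓟 S) e n f) :
    ∃ C, 0 ≤ C ∧ ∀ i ∈ S, ‖f i‖ ≤ C * e i ^ n := by
  obtain ⟨C, hC⟩ := isBigO_principal.1 h
  refine ⟨|C|, abs_nonneg C, fun i hi => (hC i hi).trans ?_⟩
  rw [Real.norm_of_nonneg (pow_nonneg (he i hi) n)]
  exact mul_le_mul_of_nonneg_right (le_abs_self C) (pow_nonneg (he i hi) n)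

lemma OO.pow_bound {n : ℕ} {f : ι → F} {g : ι → G} (C : ℝ) (k : ℕ)
    (h : ∀ i ∈ S, ‖f i‖ ≤ C * ‖g i‖ ^ k) (hg : OO (𝓟 S) e n g) : OO (𝓟 S) e (n * k) f := by
  have h1 : f =O[𝓟 S] fun i => ‖g i‖ ^ k :=
    isBigO_principal.2 ⟨C, fun i hi => by simpa using h i hi⟩
  have h2 := IsBigO.pow (IsBigO.norm_left hg) k
  simp only [← pow_mul] at h2
  exact h1.trans h2

lemma OO.mixed_bound {G' : Type*} [NormedAddCommGroup G'] {f : ι → F} {a : ι → G} {b : ι → G'}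
    (C : ℝ) (h : ∀ i ∈ S, ‖f i‖ ≤ C * ‖a i‖ * ‖b i‖ ^ 2) (ha : OO (𝓟 S) e 1 a)
    (hb : OO (𝓟 S) e 1 b) : OO (𝓟 S) e 3 f := by
  have h1 : f =O[𝓟 S] fun i => ‖a i‖ * ‖b i‖ ^ 2 :=
    isBigO_principal.2 ⟨C, fun i hi => by simpa [mul_assoc] using h i hi⟩
  have h2 := IsBigO.mul (IsBigO.norm_left ha) (IsBigO.pow (IsBigO.norm_left hb) 2)
  refine (h1.trans h2).congr_right fun i => by ring

lemma OO.congr_on {n : ℕ} {f g : ι → F} (hf : OO (𝓟 S) e n f) (h : ∀ i ∈ S, f i = g i) :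
    OO (𝓟 S) e n g := IsBigO.congr' hf (eventually_principal.2 h) EventuallyEq.rfl

end gen

variable {T p : ℝ} {ω : ℝ → ℝ → ℝ} {F : Type*} [NormedAddCommGroup F]

lemma e2_nonneg (hω : IsControl T ω) : ∀ q ∈ S2 T, 0 ≤ e2 p ω q := fun _ hq =>
  Real.rpow_nonneg (hω.nonneg hq.1 hq.2.1 hq.2.2) _
lemma e3_nonneg (hω : IsControl T ω) : ∀ q ∈ S3 T, 0 ≤ e3 p ω q := fun _ hq =>
  Real.rpow_nonneg (hω.nonneg hq.1 (hq.2.1.trans hq.2.2.1) hq.2.2.2) _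

lemma e2_bdd (hω : IsControl T ω) (hp : 0 < p) : OO (𝓟 (S2 T)) (e2 p ω) 0 (e2 p ω) := by
  refine OO.mk (ω 0 T ^ (1/p)) fun q hq => ?_
  rw [Real.norm_of_nonneg (e2_nonneg hω q hq), pow_zero, mul_one]
  exact Real.rpow_le_rpow (hω.nonneg hq.1 hq.2.1 hq.2.2)
    (hω.mono le_rfl hq.1 hq.2.1 hq.2.2 le_rfl) (by positivity)
lemma e3_bdd (hω : IsControl T ω) (hp : 0 < p) : OO (𝓟 (S3 T)) (e3 p ω) 0 (e3 p ω) := by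
  refine OO.mk (ω 0 T ^ (1/p)) fun q hq => ?_
  rw [Real.norm_of_nonneg (e3_nonneg hω q hq), pow_zero, mul_one]
  have h1 := hq.2.1.trans hq.2.2.1
  exact Real.rpow_le_rpow (hω.nonneg hq.1 h1 hq.2.2.2)
    (hω.mono le_rfl hq.1 h1 hq.2.2.2 le_rfl) (by positivity)

lemma OO.st (hω : IsControl T ω) (hp : 0 < p) {n : ℕ} {f : ℝ × ℝ → F}
    (h : OO (𝓟 (S2 T)) (e2 p ω) n f) :
    OO (𝓟 (S3 T)) (e3 p ω) n (fun q => f (q.1, q.2.1)) := by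
  obtain ⟨C, hC, H⟩ := h.elim (e2_nonneg hω)
  refine OO.mk C fun q hq => ?_
  obtain ⟨h0, h1, h2, h3⟩ := hq
  have hm : (q.1, q.2.1) ∈ S2 T := ⟨h0, h1, h2.trans h3⟩
  refine (H _ hm).trans ?_
  have := e2_nonneg (p := p) hω _ hm
  gcongr
  exact Real.rpow_le_rpow (hω.nonneg h0 h1 (h2.trans h3)) (hω.mono h0 le_rfl h1 h2 h3)
    (by positivity)

lemma OO.tu (hω : IsControl T ω) (hp : 0 < p) {n : ℕ} {f : ℝ × ℝ → F}
    (h : OO (𝓟 (S2 T)) (e2 p ω) n f) :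
    OO (𝓟 (S3 T)) (e3 p ω) n (fun q => f (q.2.1, q.2.2)) := by
  obtain ⟨C, hC, H⟩ := h.elim (e2_nonneg hω)
  refine OO.mk C fun q hq => ?_
  obtain ⟨h0, h1, h2, h3⟩ := hq
  have hm : (q.2.1, q.2.2) ∈ S2 T := ⟨h0.trans h1, h2, h3⟩
  refine (H _ hm).trans ?_
  have := e2_nonneg (p := p) hω _ hm
  gcongr
  exact Real.rpow_le_rpow (hω.nonneg (h0.trans h1) h2 h3) (hω.mono h0 h1 h2 le_rfl h3)
    (by positivity)

lemma OO.fst_of_bdd {f : ℝ → F} {C : ℝ} (h : ∀ s ∈ Set.Icc 0 T, ‖f s‖ ≤ C) :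
    OO (𝓟 (S2 T)) (e2 p ω) 0 (fun q => f q.1) :=
  OO.mk C fun q hq => by simpa using h q.1 ⟨hq.1, hq.2.1.trans hq.2.2⟩
lemma OO.snd_of_bdd {f : ℝ → F} {C : ℝ} (h : ∀ s ∈ Set.Icc 0 T, ‖f s‖ ≤ C) :
    OO (𝓟 (S2 T)) (e2 p ω) 0 (fun q => f q.2) :=
  OO.mk C fun q hq => by simpa using h q.2 ⟨hq.1.trans hq.2.1, hq.2.2⟩

/-- bounded, with increments of first order -/
def Reg (T p : ℝ) (ω : ℝ → ℝ → ℝ) (f : ℝ → F) : Prop :=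
  (∃ C, ∀ s ∈ Set.Icc 0 T, ‖f s‖ ≤ C) ∧ OO (𝓟 (S2 T)) (e2 p ω) 1 (fun q => f q.2 - f q.1)

lemma Reg.fst {f : ℝ → F} (h : Reg T p ω f) : OO (𝓟 (S2 T)) (e2 p ω) 0 (fun q => f q.1) :=
  OO.fst_of_bdd h.1.choose_spec
lemma Reg.snd {f : ℝ → F} (h : Reg T p ω f) : OO (𝓟 (S2 T)) (e2 p ω) 0 (fun q => f q.2) :=
  OO.snd_of_bdd h.1.choose_spec

lemma Reg.const (c : F) : Reg T p ω (fun _ => c) :=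
  ⟨⟨‖c‖, fun _ _ => le_rfl⟩, OO.mk 0 fun q _ => by simp⟩

lemma Reg.add [NormedSpace ℝ F] {f g : ℝ → F} (hf : Reg T p ω f) (hg : Reg T p ω g) :
    Reg T p ω (fun s => f s + g s) := by
  obtain ⟨⟨C, hC⟩, h1⟩ := hf
  obtain ⟨⟨C', hC'⟩, h2⟩ := hg
  refine ⟨⟨C + C', fun s hs => (norm_add_le _ _).trans (add_le_add (hC s hs) (hC' s hs))⟩, ?_⟩
  refine OO.congr (OO.add h1 h2) fun q => ?_
  show f q.2 - f q.1 + (g q.2 - g q.1) = (f q.2 + g q.2) - (f q.1 + g q.1)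
  abel

lemma Reg.sub [NormedSpace ℝ F] {f g : ℝ → F} (hf : Reg T p ω f) (hg : Reg T p ω g) :
    Reg T p ω (fun s => f s - g s) := by
  obtain ⟨⟨C, hC⟩, h1⟩ := hf
  obtain ⟨⟨C', hC'⟩, h2⟩ := hg
  refine ⟨⟨C + C', fun s hs => (norm_sub_le _ _).trans (add_le_add (hC s hs) (hC' s hs))⟩, ?_⟩
  refine OO.congr (OO.sub h1 h2) fun q => ?_
  show (f q.2 - f q.1) - (g q.2 - g q.1) = (f q.2 - g q.2) - (f q.1 - g q.1)
  abel

lemma Reg.app [NormedSpace ℝ F] {G : Type*} [NormedAddCommGroup G] [NormedSpace ℝ G]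
    {A : ℝ → F →L[ℝ] G} {v : ℝ → F} (hA : Reg T p ω A) (hv : Reg T p ω v) :
    Reg T p ω (fun s => A s (v s)) := by
  have h2 := (hA.2.app hv.snd).add (hA.fst.app hv.2)
  obtain ⟨⟨C, hC⟩, -⟩ := hA
  obtain ⟨⟨C', hC'⟩, -⟩ := hv
  refine ⟨⟨C * C', fun s hs => ((A s).le_opNorm _).trans (mul_le_mul (hC s hs) (hC' s hs)
    (norm_nonneg _) ((norm_nonneg _).trans (hC s hs)))⟩, ?_⟩
  refine OO.congr h2 fun q => ?_
  simp

lemma Reg.comp [NormedSpace ℝ F] {G G' : Type*} [NormedAddCommGroup G] [NormedSpace ℝ G]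
    [NormedAddCommGroup G'] [NormedSpace ℝ G']
    {A : ℝ → F →L[ℝ] G} {v : ℝ → G' →L[ℝ] F} (hA : Reg T p ω A) (hv : Reg T p ω v) :
    Reg T p ω (fun s => (A s).comp (v s)) := by
  have h2 := (hA.2.comp hv.snd).add (hA.fst.comp hv.2)
  obtain ⟨⟨C, hC⟩, -⟩ := hA
  obtain ⟨⟨C', hC'⟩, -⟩ := hv
  refine ⟨⟨C * C', fun s hs => ((A s).opNorm_comp_le _).trans (mul_le_mul (hC s hs) (hC' s hs)
    (norm_nonneg _) ((norm_nonneg _).trans (hC s hs)))⟩, ?_⟩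
  refine OO.congr h2 fun q => ?_
  ext; simp

lemma Reg.smooth {E : Type*} [NormedAddCommGroup E] [NormedSpace ℝ E] [NormedSpace ℝ F]
    {D : Set (E × E)} {H : E × E → F} {K : Set E} {y : ℝ → E}
    (hD : IsOpen D) (hH : ContDiffOn ℝ (⊤ : ℕ∞) H D) (hK : IsCompact K)
    (hKc : Convex ℝ K) (hKD : K ×ˢ K ⊆ D) (hyK : ∀ s ∈ Set.Icc 0 T, y s ∈ K)
    (hy : OO (𝓟 (S2 T)) (e2 p ω) 1 (fun q => y q.2 - y q.1)) :
    Reg T p ω (fun s => H (y s, y s)) := by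
  obtain ⟨C, -, hC⟩ := smooth_bdd hH hK hKD
  obtain ⟨C', -, hC'⟩ := smooth_lip hD hH hK hKc hKD
  refine ⟨⟨C, fun s hs => hC _ (hyK s hs) _ (hyK s hs)⟩, ?_⟩
  refine OO.pow_bound (2 * C') 1 (fun q hq => ?_) hy
  have h1 := hyK q.1 ⟨hq.1, hq.2.1.trans hq.2.2⟩
  have h2 := hyK q.2 ⟨hq.1.trans hq.2.1, hq.2.2⟩
  refine (hC' _ h1 _ h1 _ h2 _ h2).trans (le_of_eq ?_)
  ring

end concrete

section final
open Asymptotics Filter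

/-- collected first- and third-order estimates for the integrand -/
theorem integrand_estimates
    {T p : ℝ} (hp1 : 1 ≤ p) {k : ℕ}
    {ω : ℝ → ℝ → ℝ} (hω : IsControl T ω)
    {x : ℝ → Euc k} {XX : ℝ → ℝ → EuclideanSpace ℝ (Fin k × Fin k)}
    (hX : IsRoughPath T p ω x XX)
    {d : ℕ} {D : Set (Euc d × Euc d)}
    {ψ : Euc d × Euc d → Euc d} {U : Euc d × Euc d → Euc d →L[ℝ] Euc d}
    (hG : IsLocalGauge D ψ U)
    {W₀ : Set (Euc d)} (hW₀open : IsOpen W₀) (hW₀conv : Convex ℝ W₀)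
    (hWD : W₀ ×ˢ W₀ ⊆ D)
    {y : ℝ → Euc d} {y' : ℝ → Euc k →L[ℝ] Euc d}
    (hy : IsCRP p ω x 0 T y y') (hyW : ∀ s ∈ Set.Icc (0 : ℝ) T, y s ∈ W₀)
    {V : Type*} [NormedAddCommGroup V] [NormedSpace ℝ V]
    {α : ℝ → Euc d →L[ℝ] V} {α' : ℝ → Euc k →L[ℝ] Euc d →L[ℝ] V}
    (hα : IsControlledOneForm T p ω x U y α α') :
    Reg T p ω (fun s => (α s).comp (y' s)) ∧
    OO (𝓟 (S2 T)) (e2 p ω) 1 (fun q => x q.2 - x q.1) ∧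
    OO (𝓟 (S2 T)) (e2 p ω) 2 (fun q => gaugeIntegrand ψ U XX y y' α α' q.1 q.2 -
      ((α q.1).comp (y' q.1)) (x q.2 - x q.1)) ∧
    OO (𝓟 (S3 T)) (e3 p ω) 3 (fun q => gaugeIntegrand ψ U XX y y' α α' q.1 q.2.2 -
      gaugeIntegrand ψ U XX y y' α α' q.1 q.2.1 -
      gaugeIntegrand ψ U XX y y' α α' q.2.1 q.2.2) := by
  have hp : 0 < p := by linarith
  obtain ⟨hyc, hy'c, Cy, hCy⟩ := hy
  obtain ⟨hαc, hα'c, Cα, hCα⟩ := hα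
  obtain ⟨K, hK, hKc, hyK', hKW⟩ := exists_compact_convex hW₀open hW₀conv
    (isCompact_Icc.image_of_continuousOn hyc) (by rintro _ ⟨s, hs, rfl⟩; exact hyW s hs)
  have hyK : ∀ s ∈ Set.Icc 0 T, y s ∈ K := fun s hs => hyK' ⟨s, hs, rfl⟩
  have hKD : K ×ˢ K ⊆ D := (Set.prod_mono hKW hKW).trans hWD
  have hdiag : ∀ s ∈ Set.Icc 0 T, (y s, y s) ∈ D := fun s hs => hKD ⟨hyK s hs, hyK s hs⟩
  have hD := hG.open_dom
  have he2 := e2_bdd (p := p) hω hp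
  have he3 := e3_bdd (p := p) hω hp
  have fstI : ∀ q ∈ S2 T, q.1 ∈ Set.Icc 0 T := fun q hq => ⟨hq.1, hq.2.1.trans hq.2.2⟩
  have sndI : ∀ q ∈ S2 T, q.2 ∈ Set.Icc 0 T := fun q hq => ⟨hq.1.trans hq.2.1, hq.2.2⟩
  -- basic pair estimates
  have ox : OO (𝓟 (S2 T)) (e2 p ω) 1 (fun q => x q.2 - x q.1) := OO.mk 1 fun q hq => by
    simpa [e2] using hX.bound_x hq.1 hq.2.1 hq.2.2
  have oXX : OO (𝓟 (S2 T)) (e2 p ω) 2 (fun q => XX q.1 q.2) := OO.mk 1 fun q hq => by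
    have := hX.bound_XX hq.1 hq.2.1 hq.2.2
    rw [pw2 (hω.nonneg hq.1 hq.2.1 hq.2.2)] at this
    simpa [e2] using this
  have oy' : OO (𝓟 (S2 T)) (e2 p ω) 1 (fun q => y' q.2 - y' q.1) := OO.mk Cy fun q hq => by
    simpa [e2] using (hCy hq.1 hq.2.1 hq.2.2).2
  have oyR : OO (𝓟 (S2 T)) (e2 p ω) 2 (fun q => y q.2 - y q.1 - y' q.1 (x q.2 - x q.1)) :=
    OO.mk Cy fun q hq => by
      have := (hCy hq.1 hq.2.1 hq.2.2).1
      rwa [pw2 (hω.nonneg hq.1 hq.2.1 hq.2.2)] at this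
  have oαR : OO (𝓟 (S2 T)) (e2 p ω) 2
      (fun q => (α q.2).comp (U (y q.2, y q.1)) - α q.1 - α' q.1 (x q.2 - x q.1)) :=
    OO.mk Cα fun q hq => by
      have := (hCα hq.1 hq.2.1 hq.2.2).1
      rwa [pw2 (hω.nonneg hq.1 hq.2.1 hq.2.2)] at this
  have oα'R : ∀ w, OO (𝓟 (S2 T)) (e2 p ω) 1
      (fun q => (α' q.2 w).comp (U (y q.2, y q.1)) - α' q.1 w) := fun w =>
    OO.mk (Cα * ‖w‖) fun q hq => by
      simpa [e2] using (hCα hq.1 hq.2.1 hq.2.2).2 w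
  obtain ⟨Bα, hBα⟩ := isCompact_Icc.exists_bound_of_continuousOn hαc
  obtain ⟨Bα', hBα'⟩ := IsCompact.exists_bound_of_continuousOn
    (E := Euc k →L[ℝ] Euc d →L[ℝ] V) (f := α') (s := Set.Icc 0 T) isCompact_Icc hα'c
  have Ry' : Reg T p ω y' := ⟨isCompact_Icc.exists_bound_of_continuousOn hy'c, oy'⟩
  have oα's : OO (𝓟 (S2 T)) (e2 p ω) 0 (fun q => α' q.1) := OO.fst_of_bdd hBα'
  have oα't : OO (𝓟 (S2 T)) (e2 p ω) 0 (fun q => α' q.2) := OO.snd_of_bdd hBα'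
  have oαs : OO (𝓟 (S2 T)) (e2 p ω) 0 (fun q => α q.1) := OO.fst_of_bdd hBα
  have oαt : OO (𝓟 (S2 T)) (e2 p ω) 0 (fun q => α q.2) := OO.snd_of_bdd hBα
  have oy : OO (𝓟 (S2 T)) (e2 p ω) 1 (fun q => y q.2 - y q.1) :=
    ((oyR.lower he2).add (Ry'.fst.app ox)).congr fun q => by abel
  -- gauge estimates
  have hG1 := dtwo_smooth hD hG.smooth_psi
  have RU : Reg T p ω (fun s => dtwo U (y s, y s)) :=
    Reg.smooth hD (dtwo_smooth hD hG.smooth_U) hK hKc hKD hyK oy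
  have RP : Reg T p ω (fun s => dtwo (dtwo ψ) (y s, y s)) :=
    Reg.smooth hD (dtwo_smooth hD hG1) hK hKc hKD hyK oy
  have oψ : OO (𝓟 (S2 T)) (e2 p ω) 2 (fun q => ψ (y q.1, y q.2) - (y q.2 - y q.1)) := by
    obtain ⟨C, -, hC⟩ := taylor_two hD hG.smooth_psi hK hKc hKD
    refine OO.pow_bound C 2 (fun q hq => ?_) oy
    have := hC _ (hyK _ (fstI q hq)) _ (hyK _ (fstI q hq)) _ (hyK _ (sndI q hq))
    have e1 : dtwo ψ (y q.1, y q.1) = ContinuousLinearMap.id ℝ (Euc d) :=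
      hG.diag_dpsi _ (hdiag _ (fstI q hq))
    rwa [e1, hG.diag_psi _ (hdiag _ (fstI q hq)), sub_zero, ContinuousLinearMap.id_apply] at this
  have oU : OO (𝓟 (S2 T)) (e2 p ω) 2 (fun q => U (y q.2, y q.1) -
      ContinuousLinearMap.id ℝ (Euc d) + dtwo U (y q.2, y q.2) (y q.2 - y q.1)) := by
    obtain ⟨C, -, hC⟩ := taylor_two hD hG.smooth_U hK hKc hKD
    refine OO.pow_bound C 2 (fun q hq => ?_) oy
    have := hC _ (hyK _ (sndI q hq)) _ (hyK _ (sndI q hq)) _ (hyK _ (fstI q hq))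
    rw [hG.diag_U _ (hdiag _ (sndI q hq)), norm_sub_rev (y q.1)] at this
    refine le_trans (le_of_eq ?_) this
    rw [← neg_sub (y q.2) (y q.1), map_neg, sub_neg_eq_add]
  have oU1 : OO (𝓟 (S2 T)) (e2 p ω) 1 (fun q => U (y q.2, y q.1) -
      ContinuousLinearMap.id ℝ (Euc d)) :=
    ((oU.lower he2).sub (RU.snd.app oy)).congr fun q => by abel
  have Rα : Reg T p ω α := by
    refine ⟨⟨Bα, hBα⟩, alpha_diff oαt oU1 ?_⟩
    exact ((oαR.lower he2).add (oα's.app ox)).congr fun q => by abel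
  have Rα' : ∀ w, Reg T p ω (fun s => α' s w) := fun w => by
    refine ⟨⟨Bα' * ‖w‖, fun s hs => ((α' s).le_opNorm w).trans (by gcongr; exact hBα' s hs)⟩, ?_⟩
    exact alpha_diff (oα't.app (OO.const w)) oU1 (oα'R w)
  -- the bilinear coefficient
  let B : ℝ → Euc k → Euc k → V := fun s v w =>
    α s ((dtwo U (y s, y s) - dtwo (dtwo ψ) (y s, y s)) (y' s v) (y' s w)) + α' s v (y' s w)
  have RB : ∀ v w, Reg T p ω (fun s => B s v w) := fun v w =>
    (Rα.app (((RU.sub RP).app (Ry'.app (Reg.const v))).app (Ry'.app (Reg.const w)))).add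
      ((Rα' v).app (Ry'.app (Reg.const w)))
  have hB : ∀ s v w, tapply (B s) (tensorE v w) = B s v w := fun s v w =>
    tapply_tensor (B s) (LinearMap.mk₂ ℝ (B s)
      (by intros; simp [B]; abel) (by intros; simp [B, smul_sub])
      (by intros; simp [B]; abel) (by intros; simp [B, smul_sub])) (fun _ _ => rfl) v w
  have hgi : ∀ s t, gaugeIntegrand ψ U XX y y' α α' s t =
      α s (ψ (y s, y t)) + tapply (B s) (XX s t) := by
    intro s t
    unfold gaugeIntegrand
    rw [map_add, add_assoc]
    congr 1
    simp only [tapply, map_sum, map_smul, ← Finset.sum_add_distrib, ← smul_add]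
    rfl
  have oXXc : ∀ j, OO (𝓟 (S2 T)) (e2 p ω) 2 (fun q => XX q.1 q.2 j) := fun j =>
    OO.pow_bound 1 1 (fun q _ => by simpa using PiLp.norm_apply_le (XX q.1 q.2) j) oXX
  have oT : OO (𝓟 (S2 T)) (e2 p ω) 2 (fun q => tapply (B q.1) (XX q.1 q.2)) :=
    OO.sum fun j _ => (oXXc j).smul (RB _ _).fst
  refine ⟨Rα.comp Ry', ox, ?_, ?_⟩
  · refine OO.congr (((oαs.app oψ).add (oαs.app oyR)).add oT) fun q => ?_
    rw [hgi]
    simp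
    abel
  · have oTT : OO (𝓟 (S3 T)) (e3 p ω) 3
        (fun q => tapply (B q.2.1) (XX q.2.1 q.2.2) - tapply (B q.1) (XX q.2.1 q.2.2)) := by
      have : OO (𝓟 (S3 T)) (e3 p ω) 3
        (fun q => ∑ j : Fin k × Fin k, XX q.2.1 q.2.2 j •
          (B q.2.1 (eb j.1) (eb j.2) - B q.1 (eb j.1) (eb j.2))) :=
        OO.sum fun j _ => ((oXXc j).tu hω hp).smul ((RB (eb j.1) (eb j.2)).2.st hω hp)
      refine OO.congr this fun q => ?_
      simp only [tapply, smul_sub, Finset.sum_sub_distrib]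
    have oP : OO (𝓟 (S3 T)) (e3 p ω) 3 (fun q =>
        (ψ (y q.1, y q.2.2) - ψ (y q.1, y q.2.1) - ψ (y q.2.1, y q.2.2)) -
        dtwo (dtwo ψ) (y q.1, y q.1) (y q.2.1 - y q.1) (y q.2.2 - y q.2.1)) := by
      obtain ⟨C, -, hC⟩ := mixed_taylor hD hG.smooth_psi hK hKc hKD
      obtain ⟨C', -, hC'⟩ := taylor_two hD hG1 hK hKc hKD
      have q1 : OO (𝓟 (S2 T)) (e2 p ω) 2 (fun q => dtwo ψ (y q.1, y q.2) -
          ContinuousLinearMap.id ℝ (Euc d) - dtwo (dtwo ψ) (y q.1, y q.1) (y q.2 - y q.1)) := by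
        refine OO.pow_bound C' 2 (fun q hq => ?_) oy
        have := hC' _ (hyK _ (fstI q hq)) _ (hyK _ (fstI q hq)) _ (hyK _ (sndI q hq))
        have e1 : dtwo ψ (y q.1, y q.1) = ContinuousLinearMap.id ℝ (Euc d) :=
          hG.diag_dpsi _ (hdiag _ (fstI q hq))
        rwa [e1] at this
      have q2 : OO (𝓟 (S3 T)) (e3 p ω) 3 (fun q =>
          (ψ (y q.1, y q.2.2) - ψ (y q.1, y q.2.1) - ψ (y q.2.1, y q.2.2)) -
          (dtwo ψ (y q.1, y q.2.1) - ContinuousLinearMap.id ℝ (Euc d)) (y q.2.2 - y q.2.1)) := by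
        refine OO.mixed_bound C (fun q hq => ?_) (oy.st hω hp) (oy.tu hω hp)
        obtain ⟨h0, h1, h2, h3⟩ := hq
        have ht : q.2.1 ∈ Set.Icc 0 T := ⟨h0.trans h1, h2.trans h3⟩
        have := hC _ (hyK q.1 ⟨h0, h1.trans (h2.trans h3)⟩) _ (hyK _ ht) _ (hyK _ ht) _
          (hyK q.2.2 ⟨(h0.trans h1).trans h2, h3⟩)
        have e1 : dtwo ψ (y q.2.1, y q.2.1) = ContinuousLinearMap.id ℝ (Euc d) :=
          hG.diag_dpsi _ (hdiag _ ht)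
        rw [e1, hG.diag_psi _ (hdiag _ ht), sub_zero, norm_sub_rev (y q.1)] at this
        refine le_trans (le_of_eq ?_) this
        congr 2
        abel
      refine OO.congr (q2.add ((q1.st hω hp).app (oy.tu hω hp))) fun q => ?_
      simp
    have M := main_alg he3 (oαs.st hω hp) (oαt.st hω hp) (oα's.st hω hp) (Ry'.fst.st hω hp)
      (RU.fst.st hω hp) (RU.snd.st hω hp) (RP.fst.st hω hp) (ox.st hω hp) (ox.tu hω hp)
      (oyR.st hω hp) (oyR.tu hω hp) (oy'.st hω hp) (oU.st hω hp) (RU.2.st hω hp)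
      (oαR.st hω hp) (oψ.tu hω hp) oP
    refine OO.congr_on (M.sub oTT) fun q hq => ?_
    obtain ⟨h0, h1, h2, h3⟩ := hq
    rw [hgi, hgi, hgi, hX.chen h0 h1 h2 h3, tapply_add, tapply_add, hB]
    simp [B]
    abel

theorem exists_unique_gauge_aux {T p : ℝ} (hp : 0 < p) {ω : ℝ → ℝ → ℝ} (hω : IsControl T ω)
    {F : Type*} [NormedAddCommGroup F] {z : ℝ → F}
    (h : OO (𝓟 (S2 T)) (e2 p ω) 1 (fun q => z q.2 - z q.1)) : ContinuousOn z (Set.Icc 0 T) := by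
  obtain ⟨C, hC, H⟩ := h.elim (e2_nonneg hω)
  refine Metric.continuousOn_iff.2 fun b hb ε hε => ?_
  obtain ⟨δ, hδ, hs⟩ := hω.small (ε := (ε / (C + 1)) ^ p) (by positivity)
  have key : ∀ s t, 0 ≤ s → s ≤ t → t ≤ T → t - s < δ → ‖z t - z s‖ < ε := by
    intro s t h0 h1 h2 h3
    have hn := hω.nonneg h0 h1 h2
    have h4 : e2 p ω (s, t) ≤ ε / (C + 1) := by
      have := Real.rpow_le_rpow hn (hs s t h0 h1 h2 h3).le (by positivity : 0 ≤ 1 / p)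
      rwa [← Real.rpow_mul (by positivity), mul_one_div_cancel hp.ne', Real.rpow_one] at this
    calc ‖z t - z s‖ ≤ C * e2 p ω (s, t) ^ 1 := H (s, t) ⟨h0, h1, h2⟩
      _ ≤ C * (ε / (C + 1)) := by rw [pow_one]; gcongr
      _ < ε := by rw [mul_div_assoc', div_lt_iff₀ (by linarith)]; nlinarith
  refine ⟨δ, hδ, fun a ha hab => ?_⟩
  rw [Real.dist_eq] at hab
  rw [dist_eq_norm]
  rcases le_total a b with h' | h'
  · rw [norm_sub_rev]
    exact key a b ha.1 h' hb.2 (by rw [abs_sub_comm] at hab; exact (le_abs_self _).trans_lt hab)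
  · exact key b a hb.1 h' ha.2 ((le_abs_self _).trans_lt hab)

end final

/-- **Existence and uniqueness of the rough integral of a controlled one-form along a
controlled path** (Euclidean version of Theorem 3.21 of Driver–Semko): there is a unique
controlled rough path `(z, z')` with `z 0 = 0`, `z'_s = α_s ∘ y'_s` and
`z_t − z_s ≈₃ z̃_{s,t}`. -/
theorem exists_unique_gauge_integral
    {T p : ℝ} (hT : 0 < T) (hp1 : 1 ≤ p) (hp3 : p < 3) {k : ℕ} (hk : 1 ≤ k)
    {ω : ℝ → ℝ → ℝ} (hω : IsControl T ω)
    {x : ℝ → Euc k} {XX : ℝ → ℝ → EuclideanSpace ℝ (Fin k × Fin k)}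
    (hX : IsRoughPath T p ω x XX) (hgeo : IsWeakGeometric T x XX)
    {d : ℕ} {D : Set (Euc d × Euc d)}
    {ψ : Euc d × Euc d → Euc d} {U : Euc d × Euc d → Euc d →L[ℝ] Euc d}
    (hG : IsLocalGauge D ψ U)
    {W₀ : Set (Euc d)} (hW₀open : IsOpen W₀) (hW₀conv : Convex ℝ W₀)
    (hWD : W₀ ×ˢ W₀ ⊆ D)
    {y : ℝ → Euc d} {y' : ℝ → Euc k →L[ℝ] Euc d}
    (hy : IsCRP p ω x 0 T y y') (hyW : ∀ s ∈ Set.Icc (0 : ℝ) T, y s ∈ W₀)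
    {V : Type*} [NormedAddCommGroup V] [NormedSpace ℝ V] [CompleteSpace V]
    {α : ℝ → Euc d →L[ℝ] V} {α' : ℝ → Euc k →L[ℝ] Euc d →L[ℝ] V}
    (hα : IsControlledOneForm T p ω x U y α α') :
    ∃ (z : ℝ → V) (z' : ℝ → Euc k →L[ℝ] V),
      (IsCRP p ω x 0 T z z' ∧ z 0 = 0 ∧
        (∀ s ∈ Set.Icc (0 : ℝ) T, z' s = (α s).comp (y' s)) ∧
        ∃ C : ℝ, ∀ ⦃s t : ℝ⦄, 0 ≤ s → s ≤ t → t ≤ T →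
          ‖z t - z s - gaugeIntegrand ψ U XX y y' α α' s t‖ ≤ C * ω s t ^ (3 / p)) ∧
      ∀ (w : ℝ → V) (w' : ℝ → Euc k →L[ℝ] V),
        (IsCRP p ω x 0 T w w' ∧ w 0 = 0 ∧
          (∀ s ∈ Set.Icc (0 : ℝ) T, w' s = (α s).comp (y' s)) ∧
          ∃ C : ℝ, ∀ ⦃s t : ℝ⦄, 0 ≤ s → s ≤ t → t ≤ T →
            ‖w t - w s - gaugeIntegrand ψ U XX y y' α α' s t‖ ≤ C * ω s t ^ (3 / p)) →
        ∀ s ∈ Set.Icc (0 : ℝ) T, w s = z s ∧ w' s = z' s := by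
  have hp : 0 < p := by linarith
  have hθ : 1 < 3 / p := by rw [lt_div_iff₀ hp]; linarith
  obtain ⟨Rz', ox, o1, o3⟩ := integrand_estimates hp1 hω hX hG hW₀open hW₀conv hWD hy hyW hα
  have he2 := e2_bdd (p := p) hω hp
  obtain ⟨C, hC, H3⟩ := o3.elim (e3_nonneg hω)
  have hA : AlmostAdd T (3 / p) C ω (gaugeIntegrand ψ U XX y y' α α') := by
    intro s t u h0 h1 h2 h3
    rw [pw3 (hω.nonneg h0 (h1.trans h2) h3)]
    exact H3 (s, t, u) ⟨h0, h1, h2, h3⟩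
  obtain ⟨z, hz0, K, hK⟩ := sewing hT hω hθ hC hA
  have oz : OO (Filter.principal (S2 T)) (e2 p ω) 3
      (fun q => z q.2 - z q.1 - gaugeIntegrand ψ U XX y y' α α' q.1 q.2) :=
    OO.mk K fun q hq => by
      have := hK q.1 q.2 hq.1 hq.2.1 hq.2.2
      rwa [pw3 (hω.nonneg hq.1 hq.2.1 hq.2.2)] at this
  have oz2 : OO (Filter.principal (S2 T)) (e2 p ω) 2
      (fun q => z q.2 - z q.1 - ((α q.1).comp (y' q.1)) (x q.2 - x q.1)) :=
    ((oz.lower he2).add o1).congr fun q => by abel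
  have oz1 : OO (Filter.principal (S2 T)) (e2 p ω) 1 (fun q => z q.2 - z q.1) :=
    ((oz2.lower he2).add (Rz'.fst.app ox)).congr fun q => by abel
  refine ⟨z, fun s => (α s).comp (y' s), ⟨⟨?_, ?_, ?_⟩, hz0, fun s _ => rfl, K, ?_⟩, ?_⟩
  · exact exists_unique_gauge_aux hp hω oz1
  · exact exists_unique_gauge_aux hp hω Rz'.2
  · obtain ⟨C1, hC1, H1⟩ := oz2.elim (e2_nonneg hω)
    obtain ⟨C2, hC2, H2⟩ := Rz'.2.elim (e2_nonneg hω)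
    refine ⟨C1 + C2, fun s t h0 h1 h2 => ⟨?_, ?_⟩⟩
    · rw [pw2 (hω.nonneg h0 h1 h2)]
      refine (H1 (s, t) ⟨h0, h1, h2⟩).trans ?_
      have := e2_nonneg (p := p) hω (s, t) ⟨h0, h1, h2⟩
      exact mul_le_mul_of_nonneg_right (by linarith) (by positivity)
    · refine (H2 (s, t) ⟨h0, h1, h2⟩).trans ?_
      have := e2_nonneg (p := p) hω (s, t) ⟨h0, h1, h2⟩
      rw [pow_one]
      exact mul_le_mul_of_nonneg_right (by linarith) this
  · exact fun s t h0 h1 h2 => hK s t h0 h1 h2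
  · rintro w w' ⟨-, hw0, hw', Cw, hCw⟩ s hs
    refine ⟨?_, hw' s hs⟩
    have := small_additive (C := Cw + K) hT hω hθ (fun s => w s - z s) (fun s t h0 h1 h2 => by
      have e : (w t - z t) - (w s - z s) =
        (w t - w s - gaugeIntegrand ψ U XX y y' α α' s t) -
        (z t - z s - gaugeIntegrand ψ U XX y y' α α' s t) := by abel
      rw [e, add_mul]
      exact (norm_sub_le _ _).trans (add_le_add (hCw h0 h1 h2) (hK s t h0 h1 h2))) hs.1 hs.2
    simp only [hw0, hz0, sub_zero] at this
    exact sub_eq_zero.1 this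
end
end

section
/- Logarithm characterization of solving a rough differential equation on ℝ^d: Let X = (x, 𝕏) be a weak-geometric p-rough path with control ω on [0,T], F : ℝ^d → L(W, ℝ^d) smooth (write F_w(a) := F(a)w), ψ a local logarithm on ℝ^d with open domain D, z : [a,b] → ℝ^d continuous ([a,b] ⊆ [0,T]), and W₀ ⊆ ℝ^d open convex with z([a,b]) ⊆ W₀ and W₀ × W₀ ⊆ D. For s ∈ [a,b] let G_s, H_s ∈ L(W ⊗ W, ℝ^d) be the linear extensions of the bilinear maps (w, w̃) ↦ (∂_{F_w(z_s)} F_{w̃})(z_s) (the directional derivative of a ↦ F_{w̃}(a) at a = z_s in the direction F_w(z_s)) and (w, w̃) ↦ ∂_{F_w(z_s)}[a ↦ (D₂ψ)(z_s, a) F_{w̃}(a)] evaluated at a = z_s. Then the following are equivalent: (1) there exist C < ∞ and δ > 0 such that |z_t − z_s − F_{x_{s,t}}(z_s) − G_s(𝕏_{s,t})| ≤ C ω(s,t)^{3/p} for all a ≤ s ≤ t ≤ b with t − s ≤ δ; (2) there exist C < ∞ and δ > 0 such that |ψ(z_s, z_t) − F_{x_{s,t}}(z_s) − H_s(𝕏_{s,t})|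 ≤ C ω(s,t)^{3/p} for all a ≤ s ≤ t ≤ b with t − s ≤ δ. -/
noncomputable section

open scoped BigOperators

/-- `ψ` is a local logarithm on `ℝ^d` with open domain `D`. -/
structure IsLocalLog {d : ℕ} (D : Set (Euc d × Euc d)) (ψ : Euc d × Euc d → Euc d) : Prop where
  open_dom : IsOpen D
  smooth : ContDiffOn ℝ (⊤ : ℕ∞) ψ D
  diag_zero : ∀ x : Euc d, (x, x) ∈ D → ψ (x, x) = 0
  diag_deriv : ∀ x : Euc d, (x, x) ∈ D →
    fderiv ℝ (fun w => ψ (x, w)) x = ContinuousLinearMap.id ℝ (Euc d)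

/-- The second-order RDE coefficient `(w, w̃) ↦ (∂_{F_w(a)} F_{w̃})(a)`, i.e. the directional
derivative of `c ↦ F_{w̃}(c)` at `c = a` in the direction `F_w(a)`. -/
def rdeQuad {d k : ℕ} (F : Euc d → Euc k →L[ℝ] Euc d) (a : Euc d)
    (w wt : Euc k) : Euc d :=
  fderiv ℝ (fun c => F c wt) a (F a w)


/-- Partial derivative in the second variable. -/
def pd2 {E V : Type*} [NormedAddCommGroup E] [NormedSpace ℝ E]
    [NormedAddCommGroup V] [NormedSpace ℝ V] (f : E × E → V) (q : E × E) : E →L[ℝ] V :=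
  (fderiv ℝ f q).comp (ContinuousLinearMap.inr ℝ E E)

lemma pd2_contDiffOn {E V : Type*} [NormedAddCommGroup E] [NormedSpace ℝ E]
    [NormedAddCommGroup V] [NormedSpace ℝ V] {f : E × E → V} {D : Set (E × E)}
    (hD : IsOpen D) (hf : ContDiffOn ℝ (⊤ : ℕ∞) f D) : ContDiffOn ℝ (⊤ : ℕ∞) (pd2 f) D := by
  have h1 : ContDiffOn ℝ (⊤ : ℕ∞) (fderiv ℝ f) D := hf.fderiv_of_isOpen hD (by simp)
  exact h1.clm_comp contDiffOn_const

lemma pd2_hasFDerivAt {E V : Type*} [NormedAddCommGroup E] [NormedSpace ℝ E]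
    [NormedAddCommGroup V] [NormedSpace ℝ V] {f : E × E → V} {D : Set (E × E)}
    (hD : IsOpen D) (hf : ContDiffOn ℝ (⊤ : ℕ∞) f D) {u c : E} (h : (u, c) ∈ D) :
    HasFDerivAt (fun e => f (u, e)) (pd2 f (u, c)) c := by
  have h1 : DifferentiableAt ℝ f (u, c) :=
    (hf.contDiffAt (hD.mem_nhds h)).differentiableAt (by simp)
  exact h1.hasFDerivAt.comp c (hasFDerivAt_prodMk_right u c)

lemma taylor_step {E V : Type*} [NormedAddCommGroup E] [NormedSpace ℝ E]
    [NormedAddCommGroup V] [NormedSpace ℝ V] {f : E → V} {f' : E → E →L[ℝ] V} {u v : E} {M : ℝ}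
    (hf : ∀ c ∈ segment ℝ u v, HasFDerivAt f (f' c) c)
    (hb : ∀ c ∈ segment ℝ u v, ‖f' c‖ ≤ M) : ‖f v - f u‖ ≤ M * ‖v - u‖ :=
  (convex_segment u v).norm_image_sub_le_of_norm_hasFDerivWithin_le
    (fun c hc => (hf c hc).hasFDerivWithinAt) hb (left_mem_segment ℝ u v) (right_mem_segment ℝ u v)

lemma seg_dist {E : Type*} [NormedAddCommGroup E] [NormedSpace ℝ E] {u v c : E}
    (hc : c ∈ segment ℝ u v) : ‖c - u‖ ≤ ‖v - u‖ := by
  rw [segment_eq_image'] at hc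
  obtain ⟨θ, ⟨h0, h1⟩, rfl⟩ := hc
  simp only [add_sub_cancel_left, norm_smul, Real.norm_eq_abs, abs_of_nonneg h0]
  exact mul_le_of_le_one_left (norm_nonneg _) h1

lemma seg_sub {E : Type*} [NormedAddCommGroup E] [NormedSpace ℝ E] {u v c : E}
    (hc : c ∈ segment ℝ u v) : segment ℝ u c ⊆ segment ℝ u v :=
  (convex_segment u v).segment_subset (left_mem_segment ℝ u v) hc

lemma taylor3 {E V : Type*} [NormedAddCommGroup E] [NormedSpace ℝ E]
    [NormedAddCommGroup V] [NormedSpace ℝ V] {f : E → V} {f1 : E → E →L[ℝ] V}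
    {f2 : E → E →L[ℝ] E →L[ℝ] V} {u v : E} {K : ℝ}
    (hK : 0 ≤ K)
    (h1 : ∀ c ∈ segment ℝ u v, HasFDerivAt f (f1 c) c)
    (h2 : ∀ c ∈ segment ℝ u v, HasFDerivAt f1 (f2 c) c)
    (hb : ∀ c ∈ segment ℝ u v, ‖f2 c - f2 u‖ ≤ K * ‖c - u‖)
    (hs : ∀ a b, f2 u a b = f2 u b a) :
    ‖f v - f u - f1 u (v - u) - (1 / 2 : ℝ) • f2 u (v - u) (v - u)‖ ≤ K * ‖v - u‖ ^ 3 := by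
  have A2 : ∀ c ∈ segment ℝ u v, ‖f2 c - f2 u‖ ≤ K * ‖v - u‖ := fun c hc =>
    (hb c hc).trans
      (mul_le_mul_of_nonneg_left (seg_dist hc) hK)
  have A1 : ∀ c ∈ segment ℝ u v, ‖f1 c - f1 u - f2 u (c - u)‖ ≤ K * ‖v - u‖ * ‖v - u‖ := by
    intro c hc
    have := taylor_step (f := fun e => f1 e - f1 u - f2 u (e - u)) (f' := fun e => f2 e - f2 u)
      (u := u) (v := c) (M := K * ‖v - u‖)
      (fun e he => ((h2 e (seg_sub hc he)).sub_const _).sub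
        ((f2 u).hasFDerivAt.comp e ((hasFDerivAt_id e).sub_const u)))
      (fun e he => A2 e (seg_sub hc he))
    simp only [sub_self, map_zero, sub_zero] at this
    exact this.trans (mul_le_mul_of_nonneg_left (seg_dist hc) (by positivity))
  have hq : ∀ e, HasFDerivAt (fun e => (1 / 2 : ℝ) • f2 u (e - u) (e - u)) (f2 u (e - u)) e := by
    intro e
    have hl : HasFDerivAt (fun e => e - u) (ContinuousLinearMap.id ℝ E) e :=
      (hasFDerivAt_id e).sub_const u
    have := (((f2 u).hasFDerivAt.comp e hl).clm_apply hl).const_smul (1 / 2 : ℝ)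
    refine this.congr_fderiv ?_
    ext w
    simp [hs w e, hs w u]
    rw [← add_smul]; norm_num
  have := taylor_step (f := fun e => f e - f u - f1 u (e - u) - (1 / 2 : ℝ) • f2 u (e - u) (e - u))
      (f' := fun e => f1 e - f1 u - f2 u (e - u))
      (u := u) (v := v) (M := K * ‖v - u‖ * ‖v - u‖)
      (fun e he => (((h1 e he).sub_const _).sub
        ((f1 u).hasFDerivAt.comp e ((hasFDerivAt_id e).sub_const u))).sub (hq e))
      A1
  simp only [sub_self, map_zero, sub_zero, smul_zero] at this
  calc _ ≤ _ := this
    _ = _ := by ring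

lemma core_step {V : Type*} [NormedAddCommGroup V] [NormedSpace ℝ V]
    {S : V →L[ℝ] V →L[ℝ] V} {P Δ f g : V} {K L E ε : ℝ} (hK : 0 ≤ K) (hL : 0 ≤ L)
    (hε : 0 ≤ ε) (hεE : ε ≤ E) (hf : ‖f‖ ≤ K * ε) (hS : ‖S‖ ≤ K)
    (hP : ‖P - Δ - (1 / 2 : ℝ) • S Δ Δ‖ ≤ K * ‖Δ‖ ^ 3)
    (hd : ‖Δ - f‖ ≤ L * ε ^ 2) :
    ‖(P - f - (g + (1 / 2 : ℝ) • S f f)) - (Δ - f - g)‖ ≤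
      (K * (K + L * E) ^ 3 + K * (K + L * E) * L + K * L * K) * ε ^ 3 := by
  have hΔ : ‖Δ‖ ≤ (K + L * E) * ε := by
    calc ‖Δ‖ = ‖f + (Δ - f)‖ := by abel_nf
      _ ≤ ‖f‖ + ‖Δ - f‖ := norm_add_le _ _
      _ ≤ K * ε + L * ε ^ 2 := add_le_add hf hd
      _ ≤ K * ε + L * (E * ε) := by
        have : ε ^ 2 ≤ E * ε := by nlinarith
        gcongr
      _ = _ := by ring
  have e : (P - f - (g + (1 / 2 : ℝ) • S f f)) - (Δ - f - g) =
      (P - Δ - (1 / 2 : ℝ) • S Δ Δ) + (1 / 2 : ℝ) • (S Δ (Δ - f) + S (Δ - f) f) := by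
    simp only [map_sub, sub_apply, smul_add, smul_sub]
    abel
  have b1 : ‖S Δ (Δ - f)‖ ≤ K * ((K + L * E) * ε) * (L * ε ^ 2) :=
    (S.le_opNorm₂ _ _).trans (by
      have := (norm_nonneg Δ).trans hΔ
      gcongr)
  have b2 : ‖S (Δ - f) f‖ ≤ K * (L * ε ^ 2) * (K * ε) :=
    (S.le_opNorm₂ _ _).trans (by gcongr)
  have b3 : K * ‖Δ‖ ^ 3 ≤ K * ((K + L * E) * ε) ^ 3 := by gcongr
  rw [e]
  have b4 : ‖(1 / 2 : ℝ) • (S Δ (Δ - f) + S (Δ - f) f)‖ ≤ ‖S Δ (Δ - f)‖ + ‖S (Δ - f) f‖ := by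
    rw [norm_smul]
    have := norm_add_le (S Δ (Δ - f)) (S (Δ - f) f)
    have h0 := norm_nonneg (S Δ (Δ - f) + S (Δ - f) f)
    rw [Real.norm_of_nonneg (by norm_num)]
    linarith
  calc _ ≤ _ := norm_add_le _ _
    _ ≤ K * ((K + L * E) * ε) ^ 3 +
        (K * ((K + L * E) * ε) * (L * ε ^ 2) + K * (L * ε ^ 2) * (K * ε)) := by linarith
    _ = _ := by ring

lemma core_fwd {V : Type*} [NormedAddCommGroup V] [NormedSpace ℝ V] {K E C : ℝ} (hK : 0 ≤ K)
    (hE : 0 ≤ E) : ∃ C' : ℝ, ∀ (S : V →L[ℝ] V →L[ℝ] V) (P Δ f g : V) (ε : ℝ), 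
    0 ≤ ε → ε ≤ E → ‖f‖ ≤ K * ε → ‖g‖ ≤ K * ε ^ 2 → ‖S‖ ≤ K →
    ‖P - Δ - (1 / 2 : ℝ) • S Δ Δ‖ ≤ K * ‖Δ‖ ^ 3 →
    ‖Δ - f - g‖ ≤ C * ε ^ 3 → ‖P - f - (g + (1 / 2 : ℝ) • S f f)‖ ≤ C' * ε ^ 3 := by
  set L := K + |C| * E with hLdef
  refine ⟨(K * (K + L * E) ^ 3 + K * (K + L * E) * L + K * L * K) + C, ?_⟩
  intro S P Δ f g ε hε hεE hf hg hS hP h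
  have hL : 0 ≤ L := by positivity
  have hd : ‖Δ - f‖ ≤ L * ε ^ 2 := by
    calc ‖Δ - f‖ = ‖g + (Δ - f - g)‖ := by abel_nf
      _ ≤ ‖g‖ + ‖Δ - f - g‖ := norm_add_le _ _
      _ ≤ K * ε ^ 2 + |C| * ε ^ 3 := by
        gcongr
        exact h.trans (by gcongr; exact le_abs_self C)
      _ = K * ε ^ 2 + |C| * ε * ε ^ 2 := by ring
      _ ≤ K * ε ^ 2 + |C| * E * ε ^ 2 := by gcongr
      _ = _ := by ring
  have := core_step (g := g) hK hL hε hεE hf hS hP hd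
  calc _ = ‖((P - f - (g + (1 / 2 : ℝ) • S f f)) - (Δ - f - g)) + (Δ - f - g)‖ := by abel_nf
    _ ≤ _ := norm_add_le _ _
    _ ≤ _ := by linarith

lemma core_bwd {V : Type*} [NormedAddCommGroup V] [NormedSpace ℝ V] {K E C : ℝ} (hK : 0 ≤ K)
    (hE : 0 ≤ E) : ∃ C' : ℝ, ∀ (S : V →L[ℝ] V →L[ℝ] V) (P Δ f g : V) (ε : ℝ), 
    0 ≤ ε → ε ≤ E → ‖f‖ ≤ K * ε → ‖g‖ ≤ K * ε ^ 2 → ‖S‖ ≤ K →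
    ‖P - Δ - (1 / 2 : ℝ) • S Δ Δ‖ ≤ K * ‖Δ‖ ^ 3 → ‖Δ‖ ≤ 1 → K * ‖Δ‖ ≤ 1 / 4 →
    ‖P - f - (g + (1 / 2 : ℝ) • S f f)‖ ≤ C * ε ^ 3 → ‖Δ - f - g‖ ≤ C' * ε ^ 3 := by
  set Q := K + K ^ 3 + |C| * E with hQdef
  set N := 2 * (K + Q * E) with hNdef
  set L := 2 * K * N ^ 2 + Q with hLdef
  refine ⟨(K * (K + L * E) ^ 3 + K * (K + L * E) * L + K * L * K) + C, ?_⟩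
  intro S P Δ f g ε hε hεE hf hg hS hP hΔ1 hKΔ h
  have hQ : 0 ≤ Q := by positivity
  have hL : 0 ≤ L := by positivity
  have hSn : ∀ v : V, ‖(1 / 2 : ℝ) • S v v‖ ≤ K * ‖v‖ ^ 2 := by
    intro v
    have : ‖S v v‖ ≤ K * ‖v‖ * ‖v‖ := (S.le_opNorm₂ _ _).trans (by gcongr)
    rw [norm_smul]
    have h0 := norm_nonneg (S v v)
    norm_num
    nlinarith
  have hPf : ‖P - f‖ ≤ Q * ε ^ 2 := by
    calc ‖P - f‖ = ‖(P - f - (g + (1 / 2 : ℝ) • S f f)) + (g + (1 / 2 : ℝ) • S f f)‖ := by abel_nf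
      _ ≤ ‖P - f - (g + (1 / 2 : ℝ) • S f f)‖ + (‖g‖ + ‖(1 / 2 : ℝ) • S f f‖) :=
        (norm_add_le _ _).trans (by gcongr; exact norm_add_le _ _)
      _ ≤ |C| * ε ^ 3 + (K * ε ^ 2 + K * (K * ε) ^ 2) := by
        gcongr
        · exact h.trans (by gcongr; exact le_abs_self C)
        · exact (hSn f).trans (by gcongr)
      _ = |C| * ε * ε ^ 2 + (K * ε ^ 2 + K * (K * ε) ^ 2) := by ring
      _ ≤ |C| * E * ε ^ 2 + (K * ε ^ 2 + K * (K * ε) ^ 2) := by gcongr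
      _ = _ := by rw [hQdef]; ring
  have hPD : ‖P - Δ‖ ≤ 2 * K * ‖Δ‖ ^ 2 := by
    calc ‖P - Δ‖ = ‖(P - Δ - (1 / 2 : ℝ) • S Δ Δ) + (1 / 2 : ℝ) • S Δ Δ‖ := by abel_nf
      _ ≤ K * ‖Δ‖ ^ 3 + K * ‖Δ‖ ^ 2 := (norm_add_le _ _).trans (add_le_add hP (hSn Δ))
      _ ≤ K * ‖Δ‖ ^ 2 + K * ‖Δ‖ ^ 2 := by
        gcongr ?_ + _
        exact mul_le_mul_of_nonneg_left (pow_le_pow_of_le_one (norm_nonneg _) hΔ1 (by norm_num)) hK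
      _ = _ := by ring
  have hPn : ‖P‖ ≤ (K + Q * E) * ε := by
    calc ‖P‖ = ‖f + (P - f)‖ := by abel_nf
      _ ≤ ‖f‖ + ‖P - f‖ := norm_add_le _ _
      _ ≤ K * ε + Q * ε ^ 2 := add_le_add hf hPf
      _ ≤ K * ε + Q * (E * ε) := by
        have : ε ^ 2 ≤ E * ε := by nlinarith
        gcongr
      _ = _ := by ring
  have hΔN : ‖Δ‖ ≤ N * ε := by
    have h1 : ‖Δ‖ ≤ ‖P‖ + ‖P - Δ‖ := by
      calc ‖Δ‖ = ‖P - (P - Δ)‖ := by abel_nf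
        _ ≤ _ := norm_sub_le _ _
    have h2 : 2 * K * ‖Δ‖ ^ 2 ≤ 1 / 2 * ‖Δ‖ := by nlinarith [norm_nonneg Δ]
    rw [hNdef]
    linarith
  have hd : ‖Δ - f‖ ≤ L * ε ^ 2 := by
    calc ‖Δ - f‖ = ‖(P - f) - (P - Δ)‖ := by abel_nf
      _ ≤ ‖P - f‖ + ‖P - Δ‖ := norm_sub_le _ _
      _ ≤ Q * ε ^ 2 + 2 * K * (N * ε) ^ 2 := by
        gcongr
        exact hPD.trans (by gcongr)
      _ = _ := by rw [hLdef]; ring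
  have := core_step (g := g) hK hL hε hεE hf hS hP hd
  calc _ = ‖(P - f - (g + (1 / 2 : ℝ) • S f f)) - 
          ((P - f - (g + (1 / 2 : ℝ) • S f f)) - (Δ - f - g))‖ := by abel_nf
    _ ≤ _ := norm_sub_le _ _
    _ ≤ _ := by linarith

lemma norm_eb {n : ℕ} (i : Fin n) : ‖(eb i : Euc n)‖ = 1 := by
  simp [eb]

lemma tapply_bound {n m : ℕ} {V : Type*} [NormedAddCommGroup V] [NormedSpace ℝ V]
    (B : Euc n → Euc m → V) {M : ℝ} (hB : ∀ i j, ‖B (eb i) (eb j)‖ ≤ M)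
    (X : EuclideanSpace ℝ (Fin n × Fin m)) : ‖tapply B X‖ ≤ (n * m : ℝ) * M * ‖X‖ := by
  unfold tapply
  calc _ ≤ ∑ q : Fin n × Fin m, ‖X q • B (eb q.1) (eb q.2)‖ := norm_sum_le _ _
    _ ≤ ∑ q : Fin n × Fin m, ‖X‖ * M := by
      refine Finset.sum_le_sum fun q _ => ?_
      rw [norm_smul]
      exact mul_le_mul (PiLp.norm_apply_le X q) (hB _ _) (norm_nonneg _) (norm_nonneg _)
    _ = _ := by simp; ring

lemma eb_sum {n : ℕ} (v : Euc n) : v = ∑ i, v i • (eb i : Euc n) := by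
  ext j
  simp [eb, Pi.single_apply]

lemma tapply_sym {k : ℕ} {V : Type*} [NormedAddCommGroup V] [NormedSpace ℝ V]
    (β : Euc k →ₗ[ℝ] Euc k →ₗ[ℝ] V) (hβ : ∀ v w, β v w = β w v)
    (v : Euc k) (X : EuclideanSpace ℝ (Fin k × Fin k))
    (hX : ∀ i j, X (i, j) + X (j, i) = v i * v j) :
    tapply (fun w w' => β w w') X = (1 / 2 : ℝ) • β v v := by
  have h1 : β v v = ∑ i, ∑ j, (v i * v j) • β (eb i) (eb j) := by
    conv_lhs => rw [eb_sum v]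
    simp [map_sum, LinearMap.sum_apply, Finset.smul_sum, smul_smul]
    refine Finset.sum_congr rfl fun i _ => Finset.sum_congr rfl fun j _ => ?_
    rw [hβ]
  have h2 : tapply (fun w w' => β w w') X = ∑ i, ∑ j, X (i, j) • β (eb i) (eb j) := by
    simp [tapply, Fintype.sum_prod_type]
  have h3 : tapply (fun w w' => β w w') X = ∑ i, ∑ j, X (j, i) • β (eb i) (eb j) := by
    rw [h2, Finset.sum_comm]
    refine Finset.sum_congr rfl fun i _ => Finset.sum_congr rfl fun j _ => ?_
    rw [hβ]
  have h4 : β v v = tapply (fun w w' => β w w') X + tapply (fun w w' => β w w') X := by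
    conv_rhs => rw [h3]
    conv_rhs => enter [1]; rw [← h3, h2]
    rw [h1, ← Finset.sum_add_distrib]
    refine Finset.sum_congr rfl fun i _ => ?_
    rw [← Finset.sum_add_distrib]
    refine Finset.sum_congr rfl fun j _ => ?_
    rw [← hX, add_smul]
  rw [h4, ← two_smul ℝ, smul_smul]; norm_num


lemma pd2_lip {E V : Type*} [NormedAddCommGroup E] [NormedSpace ℝ E]
    [NormedAddCommGroup V] [NormedSpace ℝ V] {f : E × E → V} {D : Set (E × E)}
    (hD : IsOpen D) (hf : ContDiffOn ℝ (⊤ : ℕ∞) f D) {Q : Set E} (hQ : IsCompact Q)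
    (hQc : Convex ℝ Q) (hQD : Q ×ˢ Q ⊆ D) :
    ∃ K : ℝ, ∀ u ∈ Q, ∀ v ∈ Q, ‖f (u, v) - f (u, u)‖ ≤ K * ‖v - u‖ := by
  obtain ⟨K, hK⟩ := (hQ.prod hQ).exists_bound_of_continuousOn
    ((pd2_contDiffOn hD hf).continuousOn.mono hQD)
  refine ⟨K, fun u hu v hv => ?_⟩
  have hs := hQc.segment_subset hu hv
  exact taylor_step (f := fun e => f (u, e)) (f' := fun e => pd2 f (u, e))
    (fun c hc => pd2_hasFDerivAt hD hf (hQD ⟨hu, hs hc⟩)) (fun c hc => hK _ ⟨hu, hs hc⟩)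

lemma exists_compact_convex_s16 {E : Type*} [NormedAddCommGroup E] [NormedSpace ℝ E]
    [FiniteDimensional ℝ E] {A U : Set E} (hA : IsCompact A) (hU : IsOpen U) (hUc : Convex ℝ U)
    (hAU : A ⊆ U) : ∃ Q : Set E, IsCompact Q ∧ Convex ℝ Q ∧ A ⊆ Q ∧ Q ⊆ U := by
  classical
  have key : ∀ y ∈ U, ∃ t : Finset E, y ∈ interior (convexHull ℝ (t : Set E)) ∧
      convexHull ℝ (t : Set E) ⊆ U := by
    intro y hy
    obtain ⟨t, h1, h2⟩ := (convex_singleton (𝕜 := ℝ) y).exists_subset_interior_convexHull_finset_of_isCompact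
      isCompact_singleton (t := U) (by simpa using hU.mem_nhds hy)
    exact ⟨t, h1 rfl, h2⟩
  choose! t ht1 ht2 using key
  obtain ⟨s, hs, hcov⟩ := hA.elim_nhds_subcover (fun y => interior (convexHull ℝ (t y : Set E)))
    (fun y hy => isOpen_interior.mem_nhds (ht1 y (hAU hy)))
  refine ⟨convexHull ℝ ((s.biUnion t : Finset E) : Set E),
    (Finset.finite_toSet _).isCompact_convexHull ℝ, convex_convexHull ℝ _, ?_, ?_⟩
  · intro y hy
    obtain ⟨w, hw, hyw⟩ := Set.mem_iUnion₂.1 (hcov hy)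
    refine convexHull_mono ?_ (interior_subset hyw)
    exact_mod_cast Finset.subset_biUnion_of_mem t hw
  · refine convexHull_min ?_ hUc
    intro y hy
    obtain ⟨w, hw, hyw⟩ := Finset.mem_biUnion.1 (Finset.mem_coe.1 hy)
    exact ht2 w (hAU (hs w hw)) (subset_convexHull ℝ _ (Finset.mem_coe.2 hyw))

/-- **Logarithm characterization of solving a rough differential equation on `ℝ^d`**
(Proposition 5.1 of Driver–Semko): the RDE Davie-type expansion in terms of increments
`z_t − z_s` is equivalent to the one in terms of logarithm increments `ψ(z_s, z_t)`. -/
theorem rde_log_characterization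
    {T p : ℝ} (hT : 0 < T) (hp1 : 1 ≤ p) (hp3 : p < 3) {k : ℕ} (hk : 1 ≤ k)
    {ω : ℝ → ℝ → ℝ} (hω : IsControl T ω)
    {x : ℝ → Euc k} {XX : ℝ → ℝ → EuclideanSpace ℝ (Fin k × Fin k)}
    (hX : IsRoughPath T p ω x XX) (hgeo : IsWeakGeometric T x XX)
    {d : ℕ} {F : Euc d → Euc k →L[ℝ] Euc d} (hF : ContDiff ℝ (⊤ : ℕ∞) F)
    {D : Set (Euc d × Euc d)} {ψ : Euc d × Euc d → Euc d} (hψ : IsLocalLog D ψ)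
    {a b : ℝ} (ha : 0 ≤ a) (hab : a ≤ b) (hbT : b ≤ T)
    {z : ℝ → Euc d} (hz : ContinuousOn z (Set.Icc a b))
    {W₀ : Set (Euc d)} (hW₀open : IsOpen W₀) (hW₀conv : Convex ℝ W₀)
    (hzW : ∀ s ∈ Set.Icc a b, z s ∈ W₀) (hWD : W₀ ×ˢ W₀ ⊆ D) :
    (∃ C δ : ℝ, 0 < δ ∧ ∀ ⦃s t : ℝ⦄, a ≤ s → s ≤ t → t ≤ b → t - s ≤ δ →
        ‖z t - z s - F (z s) (x t - x s) - tapply (rdeQuad F (z s)) (XX s t)‖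
          ≤ C * ω s t ^ (3 / p)) ↔
    (∃ C δ : ℝ, 0 < δ ∧ ∀ ⦃s t : ℝ⦄, a ≤ s → s ≤ t → t ≤ b → t - s ≤ δ →
        ‖ψ (z s, z t) - F (z s) (x t - x s) -
            tapply (fun w wt =>
              fderiv ℝ (fun c => fderiv ℝ (fun e => ψ (z s, e)) c (F c wt)) (z s)
                (F (z s) w)) (XX s t)‖
          ≤ C * ω s t ^ (3 / p)) := by
  have hDo := hψ.open_dom
  obtain ⟨Q, hQ, hQc, hzQ', hQW⟩ := exists_compact_convex_s16 (isCompact_Icc.image_of_continuousOn hz)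
    hW₀open hW₀conv (by rintro _ ⟨s, hs, rfl⟩; exact hzW s hs)
  have hzQ : ∀ s ∈ Set.Icc a b, z s ∈ Q := fun s hs => hzQ' ⟨s, hs, rfl⟩
  have hQD : Q ×ˢ Q ⊆ D := (Set.prod_mono hQW hQW).trans hWD
  have s0 := hψ.smooth
  have s1 := pd2_contDiffOn hDo s0
  have s2 := pd2_contDiffOn hDo s1
  have hDQ : ∀ u ∈ Q, (u, u) ∈ D := fun u hu => hQD ⟨hu, hu⟩
  -- near the diagonal
  have hev : ∀ u ∈ Q, ∀ᶠ c in nhds u, (u, c) ∈ D := fun u hu =>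
    (Continuous.prodMk_right u).continuousAt.eventually_mem (hDo.mem_nhds (hDQ u hu))
  have hid : ∀ u ∈ Q, pd2 ψ (u, u) = ContinuousLinearMap.id ℝ (Euc d) := fun u hu => by
    rw [← hψ.diag_deriv u (hDQ u hu)]
    exact (pd2_hasFDerivAt hDo s0 (hDQ u hu)).fderiv.symm
  have hsym : ∀ u ∈ Q, ∀ v w, pd2 (pd2 ψ) (u, u) v w = pd2 (pd2 ψ) (u, u) w v := fun u hu v w =>
    second_derivative_symmetric_of_eventually
      ((hev u hu).mono fun c hc => pd2_hasFDerivAt hDo s0 hc)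
      (pd2_hasFDerivAt hDo s1 (hDQ u hu)) v w
  obtain ⟨K1, hK1⟩ := pd2_lip hDo s2 hQ hQc hQD
  obtain ⟨K2, hK2⟩ := (hQ.prod hQ).exists_bound_of_continuousOn (s2.continuousOn.mono hQD)
  obtain ⟨K3, hK3⟩ := hQ.exists_bound_of_continuousOn hF.continuous.continuousOn
  obtain ⟨K4, hK4⟩ := hQ.exists_bound_of_continuousOn
    (hF.continuous_fderiv (by simp)).continuousOn
  have hFd : ∀ u, HasFDerivAt F (fderiv ℝ F u) u := fun u =>
    (hF.differentiable (by simp) u).hasFDerivAt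
  have hFw : ∀ u w, HasFDerivAt (fun c => F c w) ((fderiv ℝ F u).flip w) u := fun u w => by
    refine ((hFd u).clm_apply (hasFDerivAt_const w u)).congr_fderiv ?_
    ext; simp
  have hH : ∀ u ∈ Q, ∀ w wt,
      fderiv ℝ (fun c => fderiv ℝ (fun e => ψ (u, e)) c (F c wt)) u (F u w) =
        rdeQuad F u w wt + pd2 (pd2 ψ) (u, u) (F u w) (F u wt) := by
    intro u hu w wt
    have e1 : (fun c => fderiv ℝ (fun e => ψ (u, e)) c (F c wt)) =ᶠ[nhds u]
        fun c => pd2 ψ (u, c) (F c wt) := (hev u hu).mono fun c hc => by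
      simp only [(pd2_hasFDerivAt hDo s0 hc).fderiv]
    rw [e1.fderiv_eq, ((pd2_hasFDerivAt hDo s1 (hDQ u hu)).clm_apply (hFw u wt)).fderiv]
    simp [rdeQuad, hid u hu, (hFw u wt).fderiv]
  set K : ℝ := |K1| + |K2| + |K3| + (k * k : ℝ) * (|K4| * |K3|) with hKdef
  have hkk : 0 ≤ (k * k : ℝ) * (|K4| * |K3|) := by positivity
  have hK : 0 ≤ K := by positivity
  have hω0 : ∀ {s t : ℝ}, a ≤ s → s ≤ t → t ≤ b → 0 ≤ ω s t := fun h1 h2 h3 =>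
    hω.nonneg (ha.trans h1) h2 (h3.trans hbT)
  set E : ℝ := ω 0 T ^ (1 / p) with hEdef
  have hE : 0 ≤ E := Real.rpow_nonneg (hω.nonneg le_rfl hT.le le_rfl) _
  have hp : 0 < 1 / p := by positivity
  have hεE : ∀ {s t : ℝ}, a ≤ s → s ≤ t → t ≤ b → ω s t ^ (1 / p) ≤ E := by
    intro s t h1 h2 h3
    refine Real.rpow_le_rpow (hω0 h1 h2 h3) ?_ hp.le
    have i1 := hω.superadditive le_rfl (ha.trans h1) (h2.trans (h3.trans hbT)) le_rfl
    have i2 := hω.superadditive (ha.trans h1) h2 (h3.trans hbT) le_rfl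
    have i3 := hω.nonneg le_rfl (ha.trans h1) (h2.trans (h3.trans hbT))
    have i4 := hω.nonneg (ha.trans (h1.trans h2)) (h3.trans hbT) le_rfl
    linarith
  have hpow2 : ∀ {r : ℝ}, 0 ≤ r → r ^ (2 / p) = (r ^ (1 / p)) ^ 2 := fun {r} hr => by
    rw [← Real.rpow_natCast, ← Real.rpow_mul hr]; congr 1; push_cast; ring
  have hpow3 : ∀ {r : ℝ}, 0 ≤ r → r ^ (3 / p) = (r ^ (1 / p)) ^ 3 := fun {r} hr => by
    rw [← Real.rpow_natCast, ← Real.rpow_mul hr]; congr 1; push_cast; ring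
  -- the per-pair facts
  have hf : ∀ {s t : ℝ}, a ≤ s → s ≤ t → t ≤ b →
      ‖F (z s) (x t - x s)‖ ≤ K * ω s t ^ (1 / p) := by
    intro s t h1 h2 h3
    have hq := hzQ s ⟨h1, h2.trans h3⟩
    have b1 : ‖F (z s)‖ ≤ K := (hK3 _ hq).trans (by
      have := le_abs_self K3
      have := abs_nonneg K1
      have := abs_nonneg K2
      linarith)
    exact ((F (z s)).le_opNorm _).trans
      (mul_le_mul b1 (hX.bound_x (ha.trans h1) h2 (h3.trans hbT)) (norm_nonneg _) hK)
  have hg : ∀ {s t : ℝ}, a ≤ s → s ≤ t → t ≤ b →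
      ‖tapply (rdeQuad F (z s)) (XX s t)‖ ≤ K * (ω s t ^ (1 / p)) ^ 2 := by
    intro s t h1 h2 h3
    have hq := hzQ s ⟨h1, h2.trans h3⟩
    have b0 := tapply_bound (rdeQuad F (z s)) (M := |K4| * |K3|) (by
      intro i j
      have : rdeQuad F (z s) (eb i) (eb j) = (fderiv ℝ F (z s)) (F (z s) (eb i)) (eb j) := by
        simp [rdeQuad, (hFw _ _).fderiv]
      rw [this]
      calc _ ≤ ‖fderiv ℝ F (z s)‖ * ‖F (z s) (eb i)‖ * ‖(eb j : Euc k)‖ :=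
            ContinuousLinearMap.le_opNorm₂ _ _ _
        _ ≤ |K4| * (|K3| * 1) * 1 := by
          rw [norm_eb]
          gcongr
          · exact (hK4 _ hq).trans (le_abs_self _)
          · refine ((F (z s)).le_opNorm _).trans ?_
            rw [norm_eb]
            gcongr
            exact (hK3 _ hq).trans (le_abs_self _)
        _ = _ := by ring) (XX s t)
    refine b0.trans ?_
    have b1 := hX.bound_XX (ha.trans h1) h2 (h3.trans hbT)
    rw [hpow2 (hω0 h1 h2 h3)] at b1
    refine mul_le_mul ?_ b1 (norm_nonneg _) hK
    have := abs_nonneg K1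
    have := abs_nonneg K2
    have := abs_nonneg K3
    linarith
  have hS : ∀ u ∈ Q, ‖pd2 (pd2 ψ) (u, u)‖ ≤ K := by
    intro u hu
    refine (hK2 (u, u) ⟨hu, hu⟩).trans ?_
    have := abs_nonneg K1
    have := le_abs_self K2
    have := abs_nonneg K3
    linarith
  have hT3 : ∀ u ∈ Q, ∀ v ∈ Q, ‖ψ (u, v) - (v - u) -
      (1 / 2 : ℝ) • pd2 (pd2 ψ) (u, u) (v - u) (v - u)‖ ≤ K * ‖v - u‖ ^ 3 := by
    intro u hu v hv
    have hs := hQc.segment_subset hu hv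
    have := taylor3 (f := fun e => ψ (u, e)) (f1 := fun e => pd2 ψ (u, e))
      (f2 := fun e => pd2 (pd2 ψ) (u, e)) (u := u) (v := v) hK
      (fun c hc => pd2_hasFDerivAt hDo s0 (hQD ⟨hu, hs hc⟩))
      (fun c hc => pd2_hasFDerivAt hDo s1 (hQD ⟨hu, hs hc⟩))
      (fun c hc => (hK1 u hu c (hs hc)).trans (by
        gcongr
        have := le_abs_self K1
        have := abs_nonneg K2
        have := abs_nonneg K3
        linarith)) (hsym u hu)
    simpa [hid u hu, hψ.diag_zero u (hDQ u hu)] using this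
  have hHX : ∀ {s t : ℝ}, a ≤ s → s ≤ t → t ≤ b →
      tapply (fun w wt => fderiv ℝ (fun c => fderiv ℝ (fun e => ψ (z s, e)) c (F c wt)) (z s)
                (F (z s) w)) (XX s t) = tapply (rdeQuad F (z s)) (XX s t) +
        (1 / 2 : ℝ) • pd2 (pd2 ψ) (z s, z s) (F (z s) (x t - x s)) (F (z s) (x t - x s)) := by
    intro s t h1 h2 h3
    have hq := hzQ s ⟨h1, h2.trans h3⟩
    let β : Euc k →ₗ[ℝ] Euc k →ₗ[ℝ] Euc d := LinearMap.mk₂ ℝ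
      (fun w w' => pd2 (pd2 ψ) (z s, z s) (F (z s) w) (F (z s) w'))
      (by intros; simp) (by intros; simp) (by intros; simp) (by intros; simp)
    have := tapply_sym β (fun v w => hsym _ hq _ _) (x t - x s) (XX s t)
      (hgeo (ha.trans h1) h2 (h3.trans hbT))
    simp only [β, LinearMap.mk₂_apply] at this
    rw [← this]
    simp only [tapply, hH _ hq, smul_add, Finset.sum_add_distrib]
  constructor
  · rintro ⟨C, δ, hδ, h⟩
    obtain ⟨C', hC'⟩ := core_fwd (V := Euc d) (C := C) hK hE
    refine ⟨C', δ, hδ, fun s t h1 h2 h3 h4 => ?_⟩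
    have hh := h h1 h2 h3 h4
    rw [hHX h1 h2 h3]
    rw [hpow3 (hω0 h1 h2 h3)] at hh ⊢
    have hs := hzQ s ⟨h1, h2.trans h3⟩
    exact hC' _ _ _ _ _ _ (Real.rpow_nonneg (hω0 h1 h2 h3) _) (hεE h1 h2 h3) (hf h1 h2 h3)
      (hg h1 h2 h3) (hS _ hs) (hT3 _ hs _ (hzQ t ⟨h1.trans h2, h3⟩)) hh
  · rintro ⟨C, δ, hδ, h⟩
    obtain ⟨C', hC'⟩ := core_bwd (V := Euc d) (C := C) hK hE
    have huc := isCompact_Icc.uniformContinuousOn_of_continuous hz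
    rw [Metric.uniformContinuousOn_iff] at huc
    have hη : 0 < 1 / (4 * (K + 1)) := by positivity
    obtain ⟨δ', hδ', hu⟩ := huc _ hη
    refine ⟨C', min δ (δ' / 2), by positivity, fun s t h1 h2 h3 h4 => ?_⟩
    have hh := h h1 h2 h3 (h4.trans (min_le_left _ _))
    rw [hHX h1 h2 h3] at hh
    rw [hpow3 (hω0 h1 h2 h3)] at hh ⊢
    have hs := hzQ s ⟨h1, h2.trans h3⟩
    have hΔ : ‖z t - z s‖ < 1 / (4 * (K + 1)) := by
      rw [← dist_eq_norm]
      refine hu t ⟨h1.trans h2, h3⟩ s ⟨h1, h2.trans h3⟩ ?_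
      rw [Real.dist_eq, abs_of_nonneg (by linarith)]
      have := h4.trans (min_le_right _ _)
      linarith
    rw [lt_div_iff₀ (by positivity)] at hΔ
    have hn := norm_nonneg (z t - z s)
    have hKn := mul_nonneg hK hn
    exact hC' _ _ _ _ _ _ (Real.rpow_nonneg (hω0 h1 h2 h3) _) (hεE h1 h2 h3) (hf h1 h2 h3)
      (hg h1 h2 h3) (hS _ hs) (hT3 _ hs _ (hzQ t ⟨h1.trans h2, h3⟩)) (by nlinarith) (by nlinarith) hh
end
end
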